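/- arXiv:2105.02450 — 5 statements merged into one kernel-verified Lean document; each statement's English description precedes it below -/
import Mathlib

section
/- (Lemma 1, viability of the constraint set) Along the distributed projection-free dynamics, if every initial decision variable satisfies x_i(0) ∈ Ω, then x_i(t) ∈ Ω for all t ≥ 0 and all agents i ∈ {1,…,N}. -/
open Filter MeasureTheory
open scoped RealInnerProductSpace

/-!
If some agent leaves the closed convex set `Ω`, a continuous linear functional `p` separates its
position strictly from `Ω`. Among all agents, the one maximising `p` is pulled only towards points
where `p` is no larger (the other agents, and `v i t ∈ Ω`), so the largest value of `p` over the
agents cannot grow while it lies above the supremum of `p` on `Ω`, and it does not start above.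
-/

open Set
open scoped Topology

section MaximumPrinciple

variable {ι : Type*} [Finite ι] {g g' : ι → ℝ → ℝ} {a b : ℝ}

theorem forall_nonpos_of_deriv_right_neg
    (hg : ∀ i, ContinuousOn (g i) (Icc a b))
    (hg' : ∀ i, ∀ t ∈ Ico a b, HasDerivWithinAt (g i) (g' i t) (Ici t) t)
    (hga : ∀ i, g i a ≤ 0)
    (hneg : ∀ i, ∀ t ∈ Ico a b, (∀ j, g j t ≤ 0) → g i t = 0 → g' i t < 0) :
    ∀ t ∈ Icc a b, ∀ i, g i t ≤ 0 := by
  have hclosed : IsClosed ({t | ∀ i, g i t ≤ 0} ∩ Icc a b) := by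
    rw [inter_comm]
    exact (continuousOn_pi.2 hg).preimage_isClosed_of_isClosed isClosed_Icc (isClosed_Iic (a := 0))
  refine hclosed.Icc_subset_of_forall_mem_nhdsWithin hga fun t ⟨ht, hab⟩ ↦
    eventually_all.2 fun i ↦ ?_
  rcases (ht i).lt_or_eq with hlt | hzero
  · have hright : ContinuousWithinAt (g i) (Ioi t) t :=
      (hg' i t hab).continuousWithinAt.mono Ioi_subset_Ici_self
    exact (hright.eventually_lt_const hlt).mono fun _ ↦ le_of_lt
  · have hslope : ∀ᶠ s in 𝓝[>] t, slope (g i) t s < 0 :=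
      (hg' i t hab).Ioi_of_Ici.limsup_slope_le' self_notMem_Ioi (hneg i t hab ht hzero)
    filter_upwards [hslope, self_mem_nhdsWithin] with s hs hts
    rw [slope_def_field, hzero, sub_zero] at hs
    exact (neg_of_div_neg_left hs (sub_pos.2 hts).le).le

theorem forall_le_of_deriv_right_nonpos_of_isMax {u : ℝ}
    (hg : ∀ i, ContinuousOn (g i) (Icc a b))
    (hg' : ∀ i, ∀ t ∈ Ico a b, HasDerivWithinAt (g i) (g' i t) (Ici t) t)
    (hga : ∀ i, g i a ≤ u)
    (hmax : ∀ i, ∀ t ∈ Ico a b, (∀ j, g j t ≤ g i t) → u ≤ g i t → g' i t ≤ 0) :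
    ∀ t ∈ Icc a b, ∀ i, g i t ≤ u := by
  -- Tilting the bound with slope `ε` makes the condition on the derivative strict.
  have hbarrier (ε : ℝ) (hε : 0 < ε) : ∀ t ∈ Icc a b, ∀ i, g i t - (u + ε * (t - a)) ≤ 0 := by
    refine forall_nonpos_of_deriv_right_neg (g' := fun i t ↦ g' i t - ε)
      (fun i ↦ (hg i).sub (by fun_prop)) (fun i t ht ↦ (hg' i t ht).sub ?_)
      (fun i ↦ by simpa using hga i) fun i t ht hle hzero ↦ ?_
    · simpa using ((((hasDerivAt_id t).sub_const a).const_mul ε).const_add u).hasDerivWithinAt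
    · have hu : u ≤ u + ε * (t - a) :=
        le_add_of_nonneg_right (mul_nonneg hε.le (sub_nonneg.2 ht.1))
      linarith [hmax i t ht (fun j ↦ by linarith [hle j]) (by linarith)]
  intro t ht i
  have hlim : Tendsto (fun ε ↦ u + ε * (t - a)) (𝓝[>] 0) (𝓝 u) :=
    tendsto_nhdsWithin_of_tendsto_nhds (Continuous.tendsto' (by fun_prop) _ _ (by simp))
  refine ge_of_tendsto hlim ?_
  filter_upwards [self_mem_nhdsWithin] with ε hε
  exact sub_nonpos.1 (hbarrier ε hε t ht i)

end MaximumPrinciple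

theorem map_sum_smul_sub_add_smul_sub_nonpos {ι R E F : Type*} [Fintype ι]
    [Ring R] [PartialOrder R] [IsOrderedRing R] [AddCommGroup E] [Module R E] [FunLike F E R]
    [LinearMapClass F R E R] (p : F) {c : ι → R} {b : R} {y : ι → E} {w z : E}
    (hc : ∀ j, 0 ≤ c j) (hb : 0 ≤ b) (hy : ∀ j, p (y j) ≤ p z) (hw : p w ≤ p z) :
    p (∑ j, c j • (y j - z) + b • (w - z)) ≤ 0 := by
  simp only [map_add, map_sum, map_smul, map_sub, smul_eq_mul]
  exact add_nonpos
    (Finset.sum_nonpos fun j _ ↦ mul_nonpos_of_nonneg_of_nonpos (hc j) (sub_nonpos.2 (hy j)))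
    (mul_nonpos_of_nonneg_of_nonpos hb (sub_nonpos.2 hw))

section Viability

variable {ι E : Type*} [NormedAddCommGroup E] [NormedSpace ℝ E] {Ω : Set E}

theorem forall_mem_of_deriv_right_nonpos_of_isMax [Finite ι] {x x' : ι → ℝ → E} {a b : ℝ}
    (hΩconv : Convex ℝ Ω) (hΩclosed : IsClosed Ω)
    (hx : ∀ i, ContinuousOn (x i) (Icc a b))
    (hx' : ∀ i, ∀ t ∈ Ico a b, HasDerivWithinAt (x i) (x' i t) (Ici t) t)
    (hxa : ∀ i, x i a ∈ Ω)
    (hmax : ∀ (p : StrongDual ℝ E) (i : ι), ∀ t ∈ Ico a b, (∀ j, p (x j t) ≤ p (x i t)) →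
      (∀ w ∈ Ω, p w ≤ p (x i t)) → p (x' i t) ≤ 0) :
    ∀ t ∈ Icc a b, ∀ i, x i t ∈ Ω := by
  intro t ht i
  by_contra hout
  obtain ⟨p, u, hpΩ, hpx⟩ := geometric_hahn_banach_closed_point hΩconv hΩclosed hout
  have hpu : ∀ s ∈ Icc a b, ∀ j, p (x j s) ≤ u :=
    forall_le_of_deriv_right_nonpos_of_isMax
      (fun j ↦ p.continuous.comp_continuousOn (hx j))
      (fun j s hs ↦ p.hasFDerivAt.comp_hasDerivWithinAt s (hx' j s hs))
      (fun j ↦ (hpΩ _ (hxa j)).le)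
      (fun j s hs hj hu ↦ hmax p j s hs hj fun w hw ↦ (hpΩ w hw).le.trans hu)
  exact (hpu t ht i).not_gt hpx

theorem lemma1_viability_general [Fintype ι] {a : ℝ → ι → ι → ℝ} {β : ℝ → ℝ} {x v : ι → ℝ → E}
    (hΩconv : Convex ℝ Ω) (hΩclosed : IsClosed Ω)
    (ha : ∀ t ≥ 0, ∀ i j, 0 ≤ a t i j) (hβ : ∀ t ≥ 0, 0 ≤ β t)
    (hxcont : ∀ i, ContinuousOn (x i) (Ici 0))
    (hx : ∀ i, ∀ t ≥ 0, HasDerivWithinAt (x i)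
      (∑ j, a t i j • (x j t - x i t) + β t • (v i t - x i t)) (Ici t) t)
    (hv : ∀ i, ∀ t ≥ 0, v i t ∈ Ω) (hx0 : ∀ i, x i 0 ∈ Ω) :
    ∀ i, ∀ t ≥ 0, x i t ∈ Ω := fun i t ht ↦
  forall_mem_of_deriv_right_nonpos_of_isMax hΩconv hΩclosed
    (fun j ↦ (hxcont j).mono Icc_subset_Ici_self) (fun j s hs ↦ hx j s hs.1) hx0
    (fun p j s hs hj hΩ ↦ map_sum_smul_sub_add_smul_sub_nonpos p
      (ha s hs.1 j) (hβ s hs.1) hj (hΩ _ (hv j s hs.1)))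
    t (right_mem_Icc.2 ht) i

end Viability

/-- Lemma 1 (viability of the constraint set): along the distributed
projection-free dynamics (Algorithm 1), if every initial decision variable
satisfies `x i 0 ∈ Ω`, then `x i t ∈ Ω` for all `t ≥ 0` and all agents `i`. -/
theorem lemma1_viability
    (n N : ℕ) (hN : 0 < N)
    (a : Fin N → Fin N → ℝ)
    (ha_nonneg : ∀ i j, 0 ≤ a i j)
    (ha_conn : ∀ i j : Fin N, Relation.ReflTransGen (fun p q => 0 < a q p) i j)
    (ha_bal : ∀ i, ∑ j, a i j = ∑ j, a j i)
    (Ω : Set (EuclideanSpace ℝ (Fin n)))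
    (hΩconv : Convex ℝ Ω) (hΩcpt : IsCompact Ω) (hΩne : Ω.Nonempty)
    (f : Fin N → EuclideanSpace ℝ (Fin n) → ℝ) (κ : ℝ) (hκ : 0 < κ)
    (hfconv : ∀ i, ConvexOn ℝ Set.univ (f i))
    (hfdiff : ∀ i, Differentiable ℝ (f i))
    (hflip : ∀ i, ∀ p ∈ Ω, ∀ q ∈ Ω,
      ‖gradient (f i) p - gradient (f i) q‖ ≤ κ * ‖p - q‖)
    (β : ℝ → ℝ)
    (hβpos : ∀ t ≥ (0:ℝ), 0 < β t)
    (hβ0 : Tendsto β atTop (nhds 0))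
    (hβdiv : Tendsto (fun t => ∫ τ in (0:ℝ)..t, β τ) atTop atTop)
    (x y z v : Fin N → ℝ → EuclideanSpace ℝ (Fin n))
    (hx : ∀ i, ∀ t ≥ (0:ℝ), HasDerivAt (x i)
      (∑ j, a i j • (x j t - x i t) + β t • (v i t - x i t)) t)
    (hy : ∀ i, ∀ t ≥ (0:ℝ), HasDerivAt (y i) (∑ j, a i j • (z j t - z i t)) t)
    (hz : ∀ i, ∀ t ≥ (0:ℝ), z i t = y i t + gradient (f i) (x i t))
    (hv : ∀ i, ∀ t ≥ (0:ℝ), v i t ∈ Ω ∧ ∀ w ∈ Ω, ⟪z i t, v i t⟫ ≤ ⟪z i t, w⟫)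
    (hx0 : ∀ i, x i 0 ∈ Ω) (hy0 : ∀ i, y i 0 = 0) :
    ∀ i, ∀ t ≥ (0:ℝ), x i t ∈ Ω := by
  exact lemma1_viability_general hΩconv hΩcpt.isClosed (fun _ _ ↦ ha_nonneg)
    (fun t ht ↦ (hβpos t ht).le) (fun i t ht ↦ (hx i t ht).continuousAt.continuousWithinAt)
    (fun i t ht ↦ (hx i t ht).hasDerivWithinAt) (fun i t ht ↦ (hv i t ht).1) hx0
end

section
/- (Theorem 1(i), consensus) Along the distributed projection-free dynamics with initial conditions x_i(0) ∈ Ω and y_i(0) = 0, all decision variables achieve consensus: for every pair of agents i, j ∈ {1,…,N}, x_i(t) − x_j(t) → 0 as t → ∞. -/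
open Filter MeasureTheory
open scoped RealInnerProductSpace

/-!
The disagreement `V = ∑ i, ∑ j, ‖x i - x j‖ ^ 2` is a Lyapunov function. Because the digraph is
weight-balanced, the consensus term contributes `-2 N` times the Dirichlet energy of the digraph to
`V'`, and strong connectivity bounds this energy below by `c * V` with `c > 0`. The Frank–Wolfe
term `β • (v - x)` contributes at most `|β| * (3 * V + O(1))`, as `v` stays in a bounded set; since
`β → 0`, the first part is absorbed by the decay and `V' ≤ -N c V + o(1)`, so `V → 0`.
-/

open scoped Topology

section Gronwall

theorem tendsto_gronwallBound_of_neg {K : ℝ} (hK : K < 0) (δ ε : ℝ) :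
    Tendsto (gronwallBound δ K ε) atTop (𝓝 (-(ε / K))) := by
  have hexp : Tendsto (fun t => Real.exp (K * t)) atTop (𝓝 0) :=
    Real.tendsto_exp_atBot.comp (tendsto_id.const_mul_atTop_of_neg hK)
  rw [gronwallBound_of_K_ne_0 hK.ne]
  simpa using (hexp.const_mul δ).add ((hexp.sub_const 1).const_mul (ε / K))

theorem tendsto_zero_of_deriv_le_neg_mul_add {V V' ρ : ℝ → ℝ} {c : ℝ} (hc : 0 < c)
    (hV_nonneg : ∀ᶠ t in atTop, 0 ≤ V t) (hV : ∀ᶠ t in atTop, HasDerivAt V (V' t) t)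
    (hρ : Tendsto ρ atTop (𝓝 0)) (hV' : ∀ᶠ t in atTop, V' t ≤ -c * V t + ρ t) :
    Tendsto V atTop (𝓝 0) := by
  refine tendsto_order.2 ⟨fun b hb => hV_nonneg.mono fun t => hb.trans_le, fun ε hε => ?_⟩
  obtain ⟨T, hT⟩ := eventually_atTop.1
    (hV.and (hV'.and (hρ.eventually_lt_const (show 0 < c * (ε / 2) by positivity))))
  have hV_le : ∀ t ≥ T, V t ≤ gronwallBound (V T) (-c) (c * (ε / 2)) (t - T) := fun t ht =>
    le_gronwallBound_of_liminf_deriv_right_le (b := t)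
      (fun s hs => (hT s hs.1).1.continuousAt.continuousWithinAt)
      (fun s hs _ hr => (hT s hs.1).1.hasDerivWithinAt.liminf_right_slope_le hr) le_rfl
      (fun s hs => by linarith [(hT s hs.1).2.1, (hT s hs.1).2.2]) t ⟨ht, le_rfl⟩
  have hbound : Tendsto (fun t => gronwallBound (V T) (-c) (c * (ε / 2)) (t - T)) atTop
      (𝓝 (ε / 2)) := by
    have hlim := (tendsto_gronwallBound_of_neg (neg_neg_of_pos hc) (V T) (c * (ε / 2))).comp
      (tendsto_atTop_add_const_right atTop (-T) tendsto_id)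
    rwa [div_neg, neg_neg, mul_div_cancel_left₀ _ hc.ne'] at hlim
  filter_upwards [eventually_ge_atTop T, hbound.eventually_lt_const (half_lt_self hε)] with t ht hlt
  exact (hV_le t ht).trans_lt hlt

end Gronwall

variable {ι E : Type*} [Fintype ι] {a : ι → ι → ℝ}

section DirichletEnergy

variable [SeminormedAddCommGroup E]

/-- The Dirichlet energy of a configuration `x` of agents on the digraph with weights `a`. It is
not normalised by `1 / 2`, and each ordered pair contributes with its own weight. -/
def dirichletEnergy (a : ι → ι → ℝ) (x : ι → E) : ℝ :=
  ∑ i, ∑ j, a i j * ‖x i - x j‖ ^ 2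

/-- The disagreement of a configuration `x` of agents: the Dirichlet energy of the complete graph
with unit weights, which serves as Lyapunov function for consensus. -/
def disagreement (x : ι → E) : ℝ :=
  dirichletEnergy (fun _ _ => 1) x

theorem disagreement_eq_sum (x : ι → E) : disagreement x = ∑ i, ∑ j, ‖x i - x j‖ ^ 2 := by
  simp only [disagreement, dirichletEnergy, one_mul]

theorem dirichletEnergy_nonneg (ha : ∀ i j, 0 ≤ a i j) (x : ι → E) : 0 ≤ dirichletEnergy a x :=
  Finset.sum_nonneg fun i _ => Finset.sum_nonneg fun j _ => mul_nonneg (ha i j) (sq_nonneg _)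

theorem disagreement_nonneg (x : ι → E) : 0 ≤ disagreement x :=
  dirichletEnergy_nonneg (fun _ _ => zero_le_one) x

theorem mul_norm_sub_sq_le_dirichletEnergy (ha : ∀ i j, 0 ≤ a i j) (x : ι → E) (i j : ι) :
    a i j * ‖x i - x j‖ ^ 2 ≤ dirichletEnergy a x := by
  have hterm : ∀ p q, 0 ≤ a p q * ‖x p - x q‖ ^ 2 := fun p q => mul_nonneg (ha p q) (sq_nonneg _)
  calc a i j * ‖x i - x j‖ ^ 2
      ≤ ∑ q, a i q * ‖x i - x q‖ ^ 2 :=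
        Finset.single_le_sum (f := fun q => a i q * ‖x i - x q‖ ^ 2)
          (fun q _ => hterm i q) (Finset.mem_univ j)
    _ ≤ dirichletEnergy a x :=
        Finset.single_le_sum (f := fun p => ∑ q, a p q * ‖x p - x q‖ ^ 2)
          (fun p _ => Finset.sum_nonneg fun q _ => hterm p q) (Finset.mem_univ i)

theorem norm_sub_sq_le_disagreement (x : ι → E) (i j : ι) : ‖x i - x j‖ ^ 2 ≤ disagreement x := by
  simpa only [one_mul, disagreement] using
    mul_norm_sub_sq_le_dirichletEnergy (fun _ _ => zero_le_one) x i j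

theorem disagreement_le_of_forall_norm_sub_le {x : ι → E} {d : ℝ} (h : ∀ i j, ‖x i - x j‖ ≤ d) :
    disagreement x ≤ Fintype.card ι ^ 2 * d ^ 2 := by
  calc disagreement x = ∑ i, ∑ j, ‖x i - x j‖ ^ 2 := disagreement_eq_sum x
    _ ≤ ∑ _i : ι, ∑ _j : ι, d ^ 2 := by gcongr; exact h _ _
    _ = Fintype.card ι ^ 2 * d ^ 2 := by
      simp only [Finset.sum_const, Finset.card_univ, nsmul_eq_mul]
      ring

theorem tendsto_sub_of_tendsto_disagreement {α : Type*} {l : Filter α} {x : ι → α → E}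
    (h : Tendsto (fun t => disagreement (x · t)) l (𝓝 0)) (i j : ι) :
    Tendsto (fun t => x i t - x j t) l (𝓝 0) := by
  have hsq : Tendsto (fun t => ‖x i t - x j t‖ ^ 2) l (𝓝 0) :=
    squeeze_zero (fun _ => sq_nonneg _) (fun t => norm_sub_sq_le_disagreement (x · t) i j) h
  rw [tendsto_zero_iff_norm_tendsto_zero]
  simpa only [Real.sqrt_sq (norm_nonneg _), Real.sqrt_zero] using hsq.sqrt

theorem exists_norm_sub_sq_le_mul_dirichletEnergy (ha : ∀ i j, 0 ≤ a i j) {i j : ι}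
    (hpath : Relation.ReflTransGen (fun p q => 0 < a q p) i j) :
    ∃ C : ℝ, 0 ≤ C ∧ ∀ x : ι → E, ‖x i - x j‖ ^ 2 ≤ C * dirichletEnergy a x := by
  induction hpath with
  | refl => exact ⟨0, le_rfl, fun x => by simp⟩
  | @tail j k _ hedge ih =>
    obtain ⟨C, hC, hle⟩ := ih
    refine ⟨2 * (C + 1 / a k j), by positivity, fun x => ?_⟩
    have hjk : ‖x j - x k‖ ^ 2 ≤ 1 / a k j * dirichletEnergy a x := by
      rw [norm_sub_rev, one_div_mul_eq_div, le_div_iff₀' hedge]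
      exact mul_norm_sub_sq_le_dirichletEnergy ha x k j
    calc ‖x i - x k‖ ^ 2
        ≤ (‖x i - x j‖ + ‖x j - x k‖) ^ 2 := by
          gcongr
          exact norm_sub_le_norm_sub_add_norm_sub _ _ _
      _ ≤ 2 * (‖x i - x j‖ ^ 2 + ‖x j - x k‖ ^ 2) := add_sq_le
      _ ≤ 2 * (C * dirichletEnergy a x + 1 / a k j * dirichletEnergy a x) := by
          gcongr
          exact hle x
      _ = 2 * (C + 1 / a k j) * dirichletEnergy a x := by ring

theorem exists_pos_mul_disagreement_le_dirichletEnergy (ha : ∀ i j, 0 ≤ a i j)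
    (hconn : ∀ i j, Relation.ReflTransGen (fun p q => 0 < a q p) i j) :
    ∃ c : ℝ, 0 < c ∧ ∀ x : ι → E, c * disagreement x ≤ dirichletEnergy a x := by
  choose C hC hle using fun i j =>
    exists_norm_sub_sq_le_mul_dirichletEnergy (E := E) ha (hconn i j)
  have hsum : 0 ≤ ∑ i, ∑ j, C i j :=
    Finset.sum_nonneg fun i _ => Finset.sum_nonneg fun j _ => hC i j
  refine ⟨1 / (∑ i, ∑ j, C i j + 1), by positivity, fun x => ?_⟩
  rw [one_div_mul_eq_div, div_le_iff₀' (by positivity)]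
  calc disagreement x = ∑ i, ∑ j, ‖x i - x j‖ ^ 2 := disagreement_eq_sum x
    _ ≤ ∑ i, ∑ j, C i j * dirichletEnergy a x := by gcongr; exact hle _ _ x
    _ = (∑ i, ∑ j, C i j) * dirichletEnergy a x := by simp only [Finset.sum_mul]
    _ ≤ (∑ i, ∑ j, C i j + 1) * dirichletEnergy a x := by
      gcongr
      · exact dirichletEnergy_nonneg ha x
      · exact le_add_of_nonneg_right zero_le_one

end DirichletEnergy

section ConsensusField

/-- The consensus vector field, i.e. minus the out-degree Laplacian of the digraph with weights `a`
applied to the configuration `x`. -/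
def consensusField [AddCommGroup E] [Module ℝ E] (a : ι → ι → ℝ) (x : ι → E) (i : ι) : E :=
  ∑ j, a i j • (x j - x i)

theorem sum_consensusField_eq_zero [AddCommGroup E] [Module ℝ E]
    (hbal : ∀ i, ∑ j, a i j = ∑ j, a j i) (x : ι → E) : ∑ i, consensusField a x i = 0 := by
  simp only [consensusField, smul_sub, Finset.sum_sub_distrib]
  rw [Finset.sum_comm]
  simp only [← Finset.sum_smul, hbal, sub_self]

variable [SeminormedAddCommGroup E] [InnerProductSpace ℝ E]

theorem two_mul_sum_inner_consensusField (hbal : ∀ i, ∑ j, a i j = ∑ j, a j i) (x : ι → E) :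
    2 * ∑ i, ⟪x i, consensusField a x i⟫ = -dirichletEnergy a x := by
  have hpolar : ∀ i j, 2 * (a i j * ⟪x i, x j - x i⟫) =
      a i j • (‖x j‖ ^ 2 - ‖x i‖ ^ 2) - a i j * ‖x i - x j‖ ^ 2 := by
    intro i j
    rw [norm_sub_sq_real, inner_sub_right, real_inner_self_eq_norm_sq, smul_eq_mul]
    ring
  have htelescope : ∑ i, ∑ j, a i j • (‖x j‖ ^ 2 - ‖x i‖ ^ 2) = 0 :=
    sum_consensusField_eq_zero hbal fun i => ‖x i‖ ^ 2
  simp only [consensusField, inner_sum, inner_smul_right, Finset.mul_sum, hpolar,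
    Finset.sum_sub_distrib, htelescope, zero_sub, dirichletEnergy]

end ConsensusField

section DisagreementForm

variable [SeminormedAddCommGroup E] [InnerProductSpace ℝ E]

/-- The symmetric bilinear form whose quadratic form is `disagreement`; at `y = x'` it is half the
derivative of the disagreement along a trajectory `x`. -/
def disagreementForm (x y : ι → E) : ℝ :=
  ∑ i, ∑ j, ⟪x i - x j, y i - y j⟫

theorem disagreementForm_self (x : ι → E) : disagreementForm x x = disagreement x := by
  simp only [disagreementForm, disagreement_eq_sum, real_inner_self_eq_norm_sq]

theorem disagreementForm_add_right (x y z : ι → E) :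
    disagreementForm x (y + z) = disagreementForm x y + disagreementForm x z := by
  simp only [disagreementForm, Pi.add_apply, add_sub_add_comm, inner_add_right,
    Finset.sum_add_distrib]

theorem disagreementForm_sub_right (x y z : ι → E) :
    disagreementForm x (y - z) = disagreementForm x y - disagreementForm x z := by
  simp only [disagreementForm, Pi.sub_apply, sub_sub_sub_comm, inner_sub_right,
    Finset.sum_sub_distrib]

theorem disagreementForm_smul_right (x y : ι → E) (r : ℝ) :
    disagreementForm x (r • y) = r * disagreementForm x y := by
  simp only [disagreementForm, Pi.smul_apply, ← smul_sub, inner_smul_right, Finset.mul_sum]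

theorem abs_two_mul_disagreementForm_le (x y : ι → E) :
    |2 * disagreementForm x y| ≤ disagreement x + disagreement y := by
  have hyoung : ∀ u w : E, |2 * ⟪u, w⟫| ≤ ‖u‖ ^ 2 + ‖w‖ ^ 2 := fun u w => by
    rw [abs_mul, abs_two]
    linarith [abs_real_inner_le_norm u w, two_mul_le_add_sq ‖u‖ ‖w‖]
  simp only [disagreementForm, disagreement_eq_sum, Finset.mul_sum, ← Finset.sum_add_distrib]
  exact (Finset.abs_sum_le_sum_abs _ _).trans <| Finset.sum_le_sum fun i _ =>
    (Finset.abs_sum_le_sum_abs _ _).trans <| Finset.sum_le_sum fun j _ => hyoung _ _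

theorem disagreementForm_of_sum_eq_zero (x : ι → E) {y : ι → E} (hy : ∑ i, y i = 0) :
    disagreementForm x y = 2 * Fintype.card ι * ∑ i, ⟪x i, y i⟫ := by
  have hcross : ∑ i, ∑ j, ⟪x i, y j⟫ = 0 := by
    simp only [← inner_sum, hy, inner_zero_right, Finset.sum_const_zero]
  have hcross' : ∑ i, ∑ j, ⟪x j, y i⟫ = 0 := by rw [Finset.sum_comm, hcross]
  simp only [disagreementForm, inner_sub_left, inner_sub_right, Finset.sum_sub_distrib, hcross,
    hcross', Finset.sum_const, Finset.card_univ, nsmul_eq_mul, ← Finset.mul_sum]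
  ring

theorem disagreementForm_consensusField (hbal : ∀ i, ∑ j, a i j = ∑ j, a j i) (x : ι → E) :
    disagreementForm x (consensusField a x) = -(Fintype.card ι * dirichletEnergy a x) := by
  rw [disagreementForm_of_sum_eq_zero x (sum_consensusField_eq_zero hbal x)]
  linear_combination (Fintype.card ι : ℝ) * two_mul_sum_inner_consensusField hbal x

theorem two_mul_disagreementForm_smul_sub_le (b : ℝ) (v x : ι → E) :
    2 * disagreementForm x (b • (v - x)) ≤ |b| * (3 * disagreement x + disagreement v) := by
  calc 2 * disagreementForm x (b • (v - x))
      = b * (2 * disagreementForm x v - 2 * disagreement x) := by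
        rw [disagreementForm_smul_right, disagreementForm_sub_right, disagreementForm_self]
        ring
    _ ≤ |b| * |2 * disagreementForm x v - 2 * disagreement x| := by
        rw [← abs_mul]
        exact le_abs_self _
    _ ≤ |b| * (|2 * disagreementForm x v| + |2 * disagreement x|) := by
        gcongr
        exact abs_sub _ _
    _ ≤ |b| * (3 * disagreement x + disagreement v) := by
        rw [abs_of_nonneg (mul_nonneg zero_le_two (disagreement_nonneg x))]
        refine mul_le_mul_of_nonneg_left ?_ (abs_nonneg b)
        linarith [abs_two_mul_disagreementForm_le x v]

theorem two_mul_disagreementForm_consensusField_add_le {c : ℝ} {x : ι → E}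
    (hbal : ∀ i, ∑ j, a i j = ∑ j, a j i) (hgap : c * disagreement x ≤ dirichletEnergy a x)
    (b : ℝ) (v : ι → E) :
    2 * disagreementForm x (consensusField a x + b • (v - x)) ≤
      (3 * |b| - 2 * (Fintype.card ι * c)) * disagreement x + |b| * disagreement v := by
  have hgap' : Fintype.card ι * (c * disagreement x) ≤ Fintype.card ι * dirichletEnergy a x := by
    gcongr
  rw [disagreementForm_add_right, disagreementForm_consensusField hbal]
  linarith [two_mul_disagreementForm_smul_sub_le b v x]

end DisagreementForm

theorem hasDerivAt_disagreement [NormedAddCommGroup E] [InnerProductSpace ℝ E] {x : ι → ℝ → E}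
    {x' : ι → E} {t : ℝ} (hx : ∀ i, HasDerivAt (x i) (x' i) t) :
    HasDerivAt (fun s => disagreement (x · s)) (2 * disagreementForm (x · t) x') t := by
  simp only [disagreement_eq_sum, disagreementForm, Finset.mul_sum]
  exact HasDerivAt.fun_sum fun i _ => HasDerivAt.fun_sum fun j _ => ((hx i).sub (hx j)).norm_sq

theorem theorem1_i_consensus_general [NormedAddCommGroup E] [InnerProductSpace ℝ E]
    (ha_nonneg : ∀ i j, 0 ≤ a i j)
    (ha_conn : ∀ i j, Relation.ReflTransGen (fun p q => 0 < a q p) i j)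
    (ha_bal : ∀ i, ∑ j, a i j = ∑ j, a j i)
    {Ω : Set E} (hΩ : Bornology.IsBounded Ω) {β : ℝ → ℝ} (hβ : Tendsto β atTop (𝓝 0))
    {x v : ι → ℝ → E}
    (hx : ∀ i, ∀ᶠ t in atTop, HasDerivAt (x i)
      (∑ j, a i j • (x j t - x i t) + β t • (v i t - x i t)) t)
    (hv : ∀ i, ∀ᶠ t in atTop, v i t ∈ Ω) (i j : ι) :
    Tendsto (fun t => x i t - x j t) atTop (𝓝 0) := by
  have : Nonempty ι := ⟨i⟩
  obtain ⟨c, hc, hgap⟩ := exists_pos_mul_disagreement_le_dirichletEnergy (E := E) ha_nonneg ha_conn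
  have hrate : 0 < Fintype.card ι * c := by positivity
  have hρ : Tendsto (fun t => |β t| * (Fintype.card ι ^ 2 * Metric.diam Ω ^ 2)) atTop (𝓝 0) := by
    simpa only [abs_zero, zero_mul] using hβ.abs.mul_const _
  have hβ_small : ∀ᶠ t in atTop, 3 * |β t| < Fintype.card ι * c :=
    (hβ.abs.const_mul 3).eventually_lt_const (by simpa using hrate)
  refine tendsto_sub_of_tendsto_disagreement (tendsto_zero_of_deriv_le_neg_mul_add hrate
    (.of_forall fun t => disagreement_nonneg _)
    ((eventually_all.2 hx).mono fun t ht => hasDerivAt_disagreement ht) hρ ?_) i j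
  filter_upwards [hβ_small, eventually_all.2 hv] with t hβt hvt
  have hv_le : disagreement (v · t) ≤ Fintype.card ι ^ 2 * Metric.diam Ω ^ 2 :=
    disagreement_le_of_forall_norm_sub_le fun p q => by
      simpa only [dist_eq_norm] using Metric.dist_le_diam_of_mem hΩ (hvt p) (hvt q)
  refine (two_mul_disagreementForm_consensusField_add_le ha_bal (hgap (x · t)) (β t)
    (v · t)).trans ?_
  gcongr
  · exact disagreement_nonneg _
  · linarith

/-- Theorem 1(i) (consensus): along the distributed projection-free dynamics
(Algorithm 1) with initial conditions `x i 0 ∈ Ω` and `y i 0 = 0`, all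
decision variables achieve consensus: `x i t - x j t → 0` as `t → ∞`. -/
theorem theorem1_i_consensus
    (n N : ℕ) (hN : 0 < N)
    (a : Fin N → Fin N → ℝ)
    (ha_nonneg : ∀ i j, 0 ≤ a i j)
    (ha_conn : ∀ i j : Fin N, Relation.ReflTransGen (fun p q => 0 < a q p) i j)
    (ha_bal : ∀ i, ∑ j, a i j = ∑ j, a j i)
    (Ω : Set (EuclideanSpace ℝ (Fin n)))
    (hΩconv : Convex ℝ Ω) (hΩcpt : IsCompact Ω) (hΩne : Ω.Nonempty)
    (f : Fin N → EuclideanSpace ℝ (Fin n) → ℝ) (κ : ℝ) (hκ : 0 < κ)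
    (hfconv : ∀ i, ConvexOn ℝ Set.univ (f i))
    (hfdiff : ∀ i, Differentiable ℝ (f i))
    (hflip : ∀ i, ∀ p ∈ Ω, ∀ q ∈ Ω,
      ‖gradient (f i) p - gradient (f i) q‖ ≤ κ * ‖p - q‖)
    (β : ℝ → ℝ)
    (hβpos : ∀ t ≥ (0:ℝ), 0 < β t)
    (hβ0 : Tendsto β atTop (nhds 0))
    (hβdiv : Tendsto (fun t => ∫ τ in (0:ℝ)..t, β τ) atTop atTop)
    (x y z v : Fin N → ℝ → EuclideanSpace ℝ (Fin n))
    (hx : ∀ i, ∀ t ≥ (0:ℝ), HasDerivAt (x i)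
      (∑ j, a i j • (x j t - x i t) + β t • (v i t - x i t)) t)
    (hy : ∀ i, ∀ t ≥ (0:ℝ), HasDerivAt (y i) (∑ j, a i j • (z j t - z i t)) t)
    (hz : ∀ i, ∀ t ≥ (0:ℝ), z i t = y i t + gradient (f i) (x i t))
    (hv : ∀ i, ∀ t ≥ (0:ℝ), v i t ∈ Ω ∧ ∀ w ∈ Ω, ⟪z i t, v i t⟫ ≤ ⟪z i t, w⟫)
    (hx0 : ∀ i, x i 0 ∈ Ω) (hy0 : ∀ i, y i 0 = 0) :
    ∀ i j : Fin N, Tendsto (fun t => x i t - x j t) atTop (nhds 0) :=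
  theorem1_i_consensus_general ha_nonneg ha_conn ha_bal hΩcpt.isBounded hβ0
    (fun i => (eventually_ge_atTop 0).mono (hx i))
    (fun i => (eventually_ge_atTop 0).mono fun t ht => (hv i t ht).1)
end

section
/- (Theorem 1(ii), global gradient tracking) Along the distributed projection-free dynamics with initial conditions x_i(0) ∈ Ω and y_i(0) = 0, each auxiliary variable z_i asymptotically tracks the global gradient: for every agent i ∈ {1,…,N}, z_i(t) − (1/N)∑_{j=1}^N ∇f_j(x_j(t)) → 0 as t → ∞. -/
open Filter MeasureTheory
open scoped RealInnerProductSpace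

/-!
Weight balance makes the diffusion `∑ j, a i j • (u j - u i)` preserve the network mean and
dissipate the energy `∑ i, ‖u i‖ ^ 2` at the rate of the disagreement
`∑ i, ∑ j, a i j * ‖u i - u j‖ ^ 2`; strong connectivity makes this rate coercive on zero-mean
states, so a diffusion driven by a vanishing perturbation reaches consensus asymptotically. The
states `x i` stay in the bounded set `Ω`, since the sum of their squared violations of any
half-space containing `Ω` cannot increase, so this applies to `x`: the velocities of the `x i`
vanish, and the gradients `∇f i (x i t)` vary slowly. They need not be differentiable in `t`, but
their sliding means are, with vanishing derivative. Replacing each gradient by its sliding mean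
turns the `y`-dynamics into another diffusion with vanishing perturbation, and the conservation
law `∑ i, y i t = 0` identifies the limit.
-/

namespace Consensus

/-- The digraph with weights `a` is strongly connected. The weight `a q p` belongs to the edge
along which `q` receives the state of `p`. -/
def StronglyConnected {ι : Type*} (a : ι → ι → ℝ) : Prop :=
  ∀ i j, Relation.ReflTransGen (fun p q => 0 < a q p) i j

section Algebra

variable {ι E F : Type*} [Fintype ι] [AddCommGroup E] [Module ℝ E] [AddCommGroup F] [Module ℝ F]

/-- The digraph with weights `a` is weight-balanced: weighted in- and out-degrees agree. -/
def WeightBalanced (a : ι → ι → ℝ) : Prop :=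
  ∀ i, ∑ j, a i j = ∑ j, a j i

/-- The diffusive coupling of agent `i` in the network state `u`, that is, `-(L u) i` for the
Laplacian `L` of the digraph with weights `a`. -/
def diffusion (a : ι → ι → ℝ) (u : ι → E) (i : ι) : E :=
  ∑ j, a i j • (u j - u i)

/-- The average of the network state `u` over all agents. -/
noncomputable def mean (u : ι → E) : E :=
  (Fintype.card ι : ℝ)⁻¹ • ∑ i, u i

lemma diffusion_add (a : ι → ι → ℝ) (u w : ι → E) (i : ι) :
    diffusion a (fun j => u j + w j) i = diffusion a u i + diffusion a w i := by
  simp only [diffusion, add_sub_add_comm, smul_add, Finset.sum_add_distrib]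

lemma diffusion_sub_const (a : ι → ι → ℝ) (u : ι → E) (m : E) (i : ι) :
    diffusion a (fun j => u j - m) i = diffusion a u i := by
  simp only [diffusion, sub_sub_sub_cancel_right]

lemma diffusion_zero (a : ι → ι → ℝ) (i : ι) : diffusion a (fun _ => (0 : E)) i = 0 := by
  simp [diffusion]

lemma map_diffusion (T : E →ₗ[ℝ] F) (a : ι → ι → ℝ) (u : ι → E) (i : ι) :
    T (diffusion a u i) = diffusion a (fun j => T (u j)) i := by
  simp [diffusion]

lemma sum_diffusion {a : ι → ι → ℝ} (hbal : WeightBalanced a) (u : ι → E) :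
    ∑ i, diffusion a u i = 0 := by
  simp only [diffusion, smul_sub, Finset.sum_sub_distrib]
  rw [Finset.sum_comm, sub_eq_zero]
  exact Finset.sum_congr rfl fun i _ => by rw [← Finset.sum_smul, ← Finset.sum_smul, hbal]

lemma mean_add (u w : ι → E) : mean (fun i => u i + w i) = mean u + mean w := by
  simp only [mean, Finset.sum_add_distrib, smul_add]

lemma mean_zero : mean (fun _ : ι => (0 : E)) = 0 := by
  simp [mean]

lemma sum_sub_mean (u : ι → E) : ∑ i, (u i - mean u) = 0 := by
  rcases isEmpty_or_nonempty ι with _ | _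
  · exact Finset.sum_of_isEmpty _
  · rw [Finset.sum_sub_distrib, Finset.sum_const, Finset.card_univ, ← Nat.cast_smul_eq_nsmul ℝ,
      mean, smul_inv_smul₀ (Nat.cast_ne_zero.2 Fintype.card_ne_zero), sub_self]

end Algebra

section Disagreement

variable {ι E : Type*} [Fintype ι] [NormedAddCommGroup E] {a : ι → ι → ℝ}

/-- The disagreement energy of the network state `u` over the digraph with weights `a`. -/
def disagreement (a : ι → ι → ℝ) (u : ι → E) : ℝ :=
  ∑ i, ∑ j, a i j * ‖u i - u j‖ ^ 2

lemma disagreement_nonneg (ha : ∀ i j, 0 ≤ a i j) (u : ι → E) : 0 ≤ disagreement a u :=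
  Finset.sum_nonneg fun i _ => Finset.sum_nonneg fun j _ => mul_nonneg (ha i j) (sq_nonneg _)

lemma mul_norm_sub_sq_le_disagreement (ha : ∀ i j, 0 ≤ a i j) (u : ι → E) (i j : ι) :
    a i j * ‖u i - u j‖ ^ 2 ≤ disagreement a u := by
  have hterm : ∀ k l, 0 ≤ a k l * ‖u k - u l‖ ^ 2 := fun k l => mul_nonneg (ha k l) (sq_nonneg _)
  calc a i j * ‖u i - u j‖ ^ 2 ≤ ∑ l, a i l * ‖u i - u l‖ ^ 2 :=
        Finset.single_le_sum (f := fun l => a i l * ‖u i - u l‖ ^ 2)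
          (fun l _ => hterm i l) (Finset.mem_univ j)
    _ ≤ disagreement a u :=
        Finset.single_le_sum (f := fun k => ∑ l, a k l * ‖u k - u l‖ ^ 2)
          (fun k _ => Finset.sum_nonneg fun l _ => hterm k l) (Finset.mem_univ i)

lemma exists_norm_sub_sq_le_mul_disagreement (ha : ∀ i j, 0 ≤ a i j) {i j : ι}
    (hij : Relation.ReflTransGen (fun p q => 0 < a q p) i j) :
    ∃ C : ℝ, 0 ≤ C ∧ ∀ u : ι → E, ‖u i - u j‖ ^ 2 ≤ C * disagreement a u := by
  induction hij with
  | refl => exact ⟨0, le_rfl, fun u => by simp⟩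
  | @tail k l _ hkl ih =>
    obtain ⟨C, hC, hik⟩ := ih
    refine ⟨2 * (C + (a l k)⁻¹), by positivity, fun u => ?_⟩
    have hedge : ‖u k - u l‖ ^ 2 ≤ (a l k)⁻¹ * disagreement a u := by
      rw [norm_sub_rev, inv_mul_eq_div, le_div_iff₀' hkl]
      exact mul_norm_sub_sq_le_disagreement ha u l k
    calc ‖u i - u l‖ ^ 2 ≤ (‖u i - u k‖ + ‖u k - u l‖) ^ 2 := by
          gcongr; exact norm_sub_le_norm_sub_add_norm_sub _ _ _
      _ ≤ 2 * (‖u i - u k‖ ^ 2 + ‖u k - u l‖ ^ 2) := add_sq_le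
      _ ≤ 2 * (C + (a l k)⁻¹) * disagreement a u := by linarith [hik u]

variable [InnerProductSpace ℝ E]

lemma sum_sum_norm_sub_sq {u : ι → E} (hu : ∑ i, u i = 0) :
    ∑ i, ∑ j, ‖u i - u j‖ ^ 2 = 2 * Fintype.card ι * ∑ i, ‖u i‖ ^ 2 := by
  simp only [norm_sub_sq_real, Finset.sum_add_distrib, Finset.sum_sub_distrib, ← Finset.mul_sum,
    ← inner_sum, hu, inner_zero_right, Finset.sum_const, Finset.card_univ, nsmul_eq_mul]
  ring

lemma exists_mul_sum_norm_sq_le_disagreement [Nonempty ι] (ha : ∀ i j, 0 ≤ a i j)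
    (hconn : StronglyConnected a) :
    ∃ c : ℝ, 0 < c ∧ ∀ u : ι → E, ∑ i, u i = 0 → c * ∑ i, ‖u i‖ ^ 2 ≤ disagreement a u := by
  choose C hC hpair using fun i j =>
    exists_norm_sub_sq_le_mul_disagreement (E := E) ha (hconn i j)
  set K : ℝ := ∑ i, ∑ j, C i j
  have hK : 0 ≤ K := Finset.sum_nonneg fun i _ => Finset.sum_nonneg fun j _ => hC i j
  refine ⟨2 * Fintype.card ι / (K + 1), by positivity, fun u hu => ?_⟩
  rw [div_mul_eq_mul_div, div_le_iff₀ (by positivity)]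
  calc 2 * Fintype.card ι * ∑ i, ‖u i‖ ^ 2 = ∑ i, ∑ j, ‖u i - u j‖ ^ 2 :=
        (sum_sum_norm_sub_sq hu).symm
    _ ≤ ∑ i, ∑ j, C i j * disagreement a u := by gcongr; exact hpair _ _ u
    _ = disagreement a u * K := by simp only [K, Finset.mul_sum, mul_comm]
    _ ≤ disagreement a u * (K + 1) := by
        gcongr
        · exact disagreement_nonneg ha u
        · linarith

lemma two_mul_sum_inner_diffusion (hbal : WeightBalanced a) (u : ι → E) :
    2 * ∑ i, ⟪u i, diffusion a u i⟫ = -disagreement a u := by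
  have hpolar : ∀ i j, a i j * ‖u i - u j‖ ^ 2
      = a i j • (‖u j‖ ^ 2 - ‖u i‖ ^ 2) - 2 * ⟪u i, a i j • (u j - u i)⟫ := by
    intro i j
    rw [norm_sub_sq_real, inner_smul_right, inner_sub_right, real_inner_self_eq_norm_sq,
      smul_eq_mul]
    ring
  have hsq : ∑ i, ∑ j, a i j • (‖u j‖ ^ 2 - ‖u i‖ ^ 2) = 0 :=
    sum_diffusion hbal fun i => ‖u i‖ ^ 2
  simp only [disagreement, diffusion, hpolar, Finset.sum_sub_distrib, hsq, inner_sum,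
    Finset.mul_sum, zero_sub, neg_neg]

end Disagreement

section Calculus

variable {ι E : Type*} [Fintype ι] [NormedAddCommGroup E] [NormedSpace ℝ E] {a : ι → ι → ℝ}

lemma tendsto_diffusion {α : Type*} {l : Filter α} {u : ι → α → E} {c : ι → E}
    (hu : ∀ i, Tendsto (u i) l (nhds (c i))) (i : ι) :
    Tendsto (fun t => diffusion a (fun j => u j t) i) l (nhds (diffusion a c i)) :=
  tendsto_finsetSum _ fun j _ => ((hu j).sub (hu i)).const_smul (a i j)

lemma tendsto_mean {α : Type*} {l : Filter α} {u : ι → α → E} {c : ι → E}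
    (hu : ∀ i, Tendsto (u i) l (nhds (c i))) :
    Tendsto (fun t => mean fun j => u j t) l (nhds (mean c)) :=
  (tendsto_finsetSum _ fun j _ => hu j).const_smul _

lemma hasDerivAt_mean {u : ι → ℝ → E} {u' : ι → E} {t : ℝ}
    (hu : ∀ i, HasDerivAt (u i) (u' i) t) :
    HasDerivAt (fun s => mean fun j => u j s) (mean u') t :=
  (HasDerivAt.fun_sum fun j _ => hu j).fun_const_smul _

lemma sum_eq_of_hasDerivAt_diffusion (hbal : WeightBalanced a) {y z : ι → ℝ → E} {t₀ : ℝ}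
    (hy : ∀ i, ∀ t ≥ t₀, HasDerivAt (y i) (diffusion a (fun j => z j t) i) t) {t : ℝ}
    (ht : t₀ ≤ t) : ∑ i, y i t = ∑ i, y i t₀ := by
  have hderiv : ∀ s ≥ t₀, HasDerivAt (fun s => ∑ i, y i s) 0 s := fun s hs => by
    simpa only [sum_diffusion hbal] using
      HasDerivAt.fun_sum fun i (_ : i ∈ Finset.univ) => hy i s hs
  exact constant_of_has_deriv_right_zero
    (fun s hs => (hderiv s hs.1).continuousAt.continuousWithinAt)
    (fun s hs => (hderiv s hs.1).hasDerivWithinAt) t ⟨ht, le_rfl⟩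

end Calculus

section PerturbedDiffusion

lemma tendsto_zero_of_hasDerivAt_le {V V' r : ℝ → ℝ} {c : ℝ} (hc : 0 < c) (hV : ∀ t, 0 ≤ V t)
    (hderiv : ∀ᶠ t in atTop, HasDerivAt V (V' t) t)
    (hle : ∀ᶠ t in atTop, V' t ≤ -c * V t + r t) (hr : Tendsto r atTop (nhds 0)) :
    Tendsto V atTop (nhds 0) := by
  refine tendsto_order.2 ⟨fun b hb => Eventually.of_forall fun t => hb.trans_le (hV t),
    fun ε hε => ?_⟩
  obtain ⟨T, hT⟩ := (hderiv.and (hle.and (hr.eventually_le_const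
    (show 0 < c * (ε / 2) by positivity)))).exists_forall_of_atTop
  have hbound : ∀ t ≥ T, V t ≤ gronwallBound (V T) (-c) (c * (ε / 2)) (t - T) := fun t ht =>
    le_gronwallBound_of_liminf_deriv_right_le
      (fun s hs => (hT s hs.1).1.continuousAt.continuousWithinAt)
      (fun s hs _ => (hT s hs.1).1.hasDerivWithinAt.liminf_right_slope_le) le_rfl
      (fun s hs => (hT s hs.1).2.1.trans (by gcongr; exact (hT s hs.1).2.2)) t ⟨ht, le_rfl⟩
  have hexp : Tendsto (fun t => Real.exp (-c * (t - T))) atTop (nhds 0) :=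
    Real.tendsto_exp_atBot.comp
      ((tendsto_atTop_add_const_right _ (-T) tendsto_id).const_mul_atTop_of_neg (neg_lt_zero.2 hc))
  have hlim : Tendsto (fun t => gronwallBound (V T) (-c) (c * (ε / 2)) (t - T)) atTop
      (nhds (ε / 2)) := by
    simp only [gronwallBound_of_K_ne_0 (neg_ne_zero.2 hc.ne')]
    convert (hexp.const_mul (V T)).add ((hexp.sub_const 1).const_mul (c * (ε / 2) / -c)) using 2
    field_simp
    ring
  filter_upwards [hlim.eventually_lt_const (half_lt_self hε), eventually_ge_atTop T] with t ht hTt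
  exact (hbound t hTt).trans_lt ht

variable {ι E : Type*} [Fintype ι] [NormedAddCommGroup E] [InnerProductSpace ℝ E] {a : ι → ι → ℝ}

lemma two_mul_inner_le (u q : E) {c : ℝ} (hc : 0 < c) :
    2 * ⟪u, q⟫ ≤ c * ‖u‖ ^ 2 + c⁻¹ * ‖q‖ ^ 2 := by
  have hsq : c * ‖u‖ ^ 2 + c⁻¹ * ‖q‖ ^ 2 - 2 * (‖u‖ * ‖q‖) = c⁻¹ * (c * ‖u‖ - ‖q‖) ^ 2 := by
    field_simp
    ring
  have hnonneg : 0 ≤ c⁻¹ * (c * ‖u‖ - ‖q‖) ^ 2 := by positivity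
  linarith [real_inner_le_norm u q]

lemma tendsto_sum_norm_sq_of_diffusion [Nonempty ι] (ha : ∀ i j, 0 ≤ a i j)
    (hconn : StronglyConnected a) (hbal : WeightBalanced a) {u q : ι → ℝ → E}
    (hu : ∀ i, ∀ᶠ t in atTop, HasDerivAt (u i) (diffusion a (fun j => u j t) i + q i t) t)
    (hzero : ∀ t, ∑ i, u i t = 0) (hq : ∀ i, Tendsto (q i) atTop (nhds 0)) :
    Tendsto (fun t => ∑ i, ‖u i t‖ ^ 2) atTop (nhds 0) := by
  obtain ⟨c, hc, hcoercive⟩ := exists_mul_sum_norm_sq_le_disagreement (E := E) ha hconn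
  have hforce : Tendsto (fun t => (c / 2)⁻¹ * ∑ i, ‖q i t‖ ^ 2) atTop (nhds 0) := by
    simpa using (tendsto_finsetSum Finset.univ fun i _ => (hq i).norm.pow 2).const_mul (c / 2)⁻¹
  refine tendsto_zero_of_hasDerivAt_le
    (V' := fun t => ∑ i, 2 * ⟪u i t, diffusion a (fun j => u j t) i + q i t⟫) (half_pos hc)
    (fun t => Finset.sum_nonneg fun i _ => sq_nonneg _) ?_ (Eventually.of_forall fun t => ?_) hforce
  · filter_upwards [eventually_all.2 hu] with t ht
    exact HasDerivAt.fun_sum fun i _ => (ht i).norm_sq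
  · have hcross : ∑ i, 2 * ⟪u i t, q i t⟫
        ≤ ∑ i, (c / 2 * ‖u i t‖ ^ 2 + (c / 2)⁻¹ * ‖q i t‖ ^ 2) :=
      Finset.sum_le_sum fun i _ => two_mul_inner_le _ _ (half_pos hc)
    have hdissipation := two_mul_sum_inner_diffusion hbal fun i => u i t
    have hrate := hcoercive _ (hzero t)
    simp only [inner_add_right, mul_add, Finset.sum_add_distrib, ← Finset.mul_sum] at hcross ⊢
    linarith

theorem tendsto_sub_mean_of_diffusion (ha : ∀ i j, 0 ≤ a i j) (hconn : StronglyConnected a)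
    (hbal : WeightBalanced a) {w p : ι → ℝ → E}
    (hw : ∀ i, ∀ᶠ t in atTop, HasDerivAt (w i) (diffusion a (fun j => w j t) i + p i t) t)
    (hp : ∀ i, Tendsto (p i) atTop (nhds 0)) (i : ι) :
    Tendsto (fun t => w i t - mean fun j => w j t) atTop (nhds 0) := by
  have : Nonempty ι := ⟨i⟩
  have hmean : ∀ᶠ t in atTop,
      HasDerivAt (fun s => mean fun j => w j s) (mean fun j => p j t) t := by
    filter_upwards [eventually_all.2 hw] with t ht
    refine (hasDerivAt_mean ht).congr_deriv ?_
    simp only [mean, Finset.sum_add_distrib, sum_diffusion hbal, zero_add]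
  have henergy : Tendsto (fun t => ∑ k, ‖w k t - mean fun j => w j t‖ ^ 2) atTop (nhds 0) := by
    refine tendsto_sum_norm_sq_of_diffusion ha hconn hbal
      (q := fun k t => p k t - mean fun j => p j t) (fun k => ?_) (fun t => sum_sub_mean _)
      fun k => ?_
    · filter_upwards [hw k, hmean] with t hkt hmt
      rw [diffusion_sub_const, ← add_sub_assoc]
      exact hkt.fun_sub hmt
    · simpa only [mean_zero, sub_zero] using (hp k).sub (tendsto_mean hp)
  have hsq : Tendsto (fun t => ‖w i t - mean fun j => w j t‖ ^ 2) atTop (nhds 0) :=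
    squeeze_zero (fun t => sq_nonneg _) (fun t => Finset.single_le_sum
      (f := fun k => ‖w k t - mean fun j => w j t‖ ^ 2) (fun k _ => sq_nonneg _)
      (Finset.mem_univ i)) henergy
  exact tendsto_zero_iff_norm_tendsto_zero.2 (by simpa using hsq.sqrt)

end PerturbedDiffusion

section SlowlyVarying

/-- The signal `g` varies slowly: its oscillation over the time window `[t, t + 1]` vanishes as
`t → ∞`. This is the additive notion, not slow variation in the sense of Karamata. -/
def SlowlyVarying {X : Type*} [PseudoMetricSpace X] (g : ℝ → X) : Prop :=
  ∀ ε > 0, ∀ᶠ t in atTop, ∀ s ∈ Set.Icc t (t + 1), dist (g s) (g t) < ε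

lemma SlowlyVarying.congr' {X : Type*} [PseudoMetricSpace X] {g h : ℝ → X}
    (hg : SlowlyVarying g) (hgh : g =ᶠ[atTop] h) : SlowlyVarying h := by
  intro ε hε
  filter_upwards [hg ε hε, eventually_forall_ge_atTop.2 hgh] with t ht heq s hs
  rw [← heq s hs.1, ← heq t le_rfl]
  exact ht s hs

lemma SlowlyVarying.comp_uniformContinuousOn {X Y : Type*} [PseudoMetricSpace X]
    [PseudoMetricSpace Y] {g : ℝ → X} {φ : X → Y} {s : Set X} (hg : SlowlyVarying g)
    (hφ : UniformContinuousOn φ s) (hgs : ∀ᶠ t in atTop, g t ∈ s) :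
    SlowlyVarying fun t => φ (g t) := by
  intro ε hε
  obtain ⟨δ, hδ, hφδ⟩ := Metric.uniformContinuousOn_iff.1 hφ ε hε
  filter_upwards [hg δ hδ, eventually_forall_ge_atTop.2 hgs] with t ht hmem r hr
  exact hφδ _ (hmem r hr.1) _ (hmem t le_rfl) (ht r hr)

lemma SlowlyVarying.tendsto_shift_sub {E : Type*} [NormedAddCommGroup E] {g : ℝ → E}
    (hg : SlowlyVarying g) :
    Tendsto (fun t => g (t + 1) - g t) atTop (nhds 0) := by
  refine Metric.tendsto_nhds.2 fun ε hε => ?_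
  filter_upwards [hg ε hε] with t ht
  rw [dist_zero_right, ← dist_eq_norm]
  exact ht (t + 1) ⟨by linarith, le_rfl⟩

variable {E : Type*} [NormedAddCommGroup E] [NormedSpace ℝ E] {g : ℝ → E}

lemma slowlyVarying_of_tendsto_deriv_zero {g' : ℝ → E}
    (hg : ∀ᶠ t in atTop, HasDerivAt g (g' t) t) (hg' : Tendsto g' atTop (nhds 0)) :
    SlowlyVarying g := by
  intro ε hε
  have hsmall : ∀ᶠ t in atTop, ‖g' t‖ ≤ ε / 2 :=
    hg'.norm.eventually_le_const (by simpa using half_pos hε)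
  filter_upwards [eventually_forall_ge_atTop.2 (hg.and hsmall)] with t ht s hs
  calc dist (g s) (g t) = ‖g s - g t‖ := dist_eq_norm _ _
    _ ≤ ε / 2 * (s - t) := norm_image_sub_le_of_norm_deriv_le_segment'
        (fun r hr => (ht r hr.1).1.hasDerivWithinAt) (fun r hr => (ht r hr.1).2) s ⟨hs.1, le_rfl⟩
    _ ≤ ε / 2 := mul_le_of_le_one_right (half_pos hε).le (by linarith [hs.2])
    _ < ε := half_lt_self hε

/-- The average of the signal `g` over the unit time window `[t, t + 1]`. -/
noncomputable def slidingMean (g : ℝ → E) (t : ℝ) : E :=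
  ∫ s in t..(t + 1), g s

lemma hasDerivAt_slidingMean [CompleteSpace E] (hg : Continuous g) (t : ℝ) :
    HasDerivAt (slidingMean g) (g (t + 1) - g t) t := by
  have hprim : ∀ t, HasDerivAt (fun t => ∫ s in (0 : ℝ)..t, g s) (g t) t := fun t =>
    hg.integral_hasStrictDerivAt 0 t |>.hasDerivAt
  have hsplit : slidingMean g = fun t => (∫ s in (0 : ℝ)..(t + 1), g s) - ∫ s in (0 : ℝ)..t, g s :=
    funext fun t => (intervalIntegral.integral_interval_sub_left (hg.intervalIntegrable _ _)
      (hg.intervalIntegrable _ _)).symm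
  rw [hsplit]
  exact ((hprim (t + 1)).comp_add_const t 1).sub (hprim t)

lemma SlowlyVarying.tendsto_sub_slidingMean [CompleteSpace E] (hg : SlowlyVarying g)
    (hcont : Continuous g) :
    Tendsto (fun t => g t - slidingMean g t) atTop (nhds 0) := by
  refine Metric.tendsto_nhds.2 fun ε hε => ?_
  filter_upwards [hg (ε / 2) (half_pos hε)] with t ht
  have hint : slidingMean g t - g t = ∫ s in t..(t + 1), (g s - g t) := by
    rw [intervalIntegral.integral_sub (hcont.intervalIntegrable _ _) (by simp)]
    simp [slidingMean]
  calc dist (g t - slidingMean g t) 0 = ‖∫ s in t..(t + 1), (g s - g t)‖ := by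
        rw [dist_zero_right, norm_sub_rev, hint]
    _ ≤ ε / 2 * |t + 1 - t| := intervalIntegral.norm_integral_le_of_norm_le_const fun s hs => by
        rw [Set.uIoc_of_le (by linarith)] at hs
        exact (dist_eq_norm (g s) (g t) ▸ ht s ⟨hs.1.le, hs.2⟩).le
    _ < ε := by simpa using hε

lemma SlowlyVarying.exists_smoothing [CompleteSpace E] (hg : SlowlyVarying g) {t₀ : ℝ}
    (hcont : ContinuousOn g (Set.Ici t₀)) :
    ∃ G G' : ℝ → E, (∀ t, HasDerivAt G (G' t) t) ∧ Tendsto G' atTop (nhds 0) ∧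
      Tendsto (fun t => g t - G t) atTop (nhds 0) := by
  set h : ℝ → E := fun t => g (max t t₀)
  have hhg : h =ᶠ[atTop] g := by
    filter_upwards [eventually_ge_atTop t₀] with t ht
    simp only [h, max_eq_left ht]
  have hh : SlowlyVarying h := hg.congr' hhg.symm
  have hhcont : Continuous h :=
    hcont.comp_continuous (by fun_prop) fun t => Set.mem_Ici.2 (le_max_right t t₀)
  refine ⟨slidingMean h, fun t => h (t + 1) - h t, hasDerivAt_slidingMean hhcont,
    hh.tendsto_shift_sub, (hh.tendsto_sub_slidingMean hhcont).congr' ?_⟩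
  filter_upwards [hhg] with t ht
  rw [ht]

end SlowlyVarying

theorem tendsto_dynamic_average_consensus {ι E : Type*} [Fintype ι] [NormedAddCommGroup E]
    [InnerProductSpace ℝ E] [CompleteSpace E] {a : ι → ι → ℝ} (ha : ∀ i j, 0 ≤ a i j)
    (hconn : StronglyConnected a) (hbal : WeightBalanced a) {y r : ι → ℝ → E} {t₀ : ℝ}
    (hy : ∀ i, ∀ t ≥ t₀, HasDerivAt (y i) (diffusion a (fun j => y j t + r j t) i) t)
    (hsum : ∑ i, y i t₀ = 0) (hcont : ∀ i, ContinuousOn (r i) (Set.Ici t₀))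
    (hslow : ∀ i, SlowlyVarying (r i)) (i : ι) :
    Tendsto (fun t => y i t + r i t - mean fun j => r j t) atTop (nhds 0) := by
  choose R R' hR hR' hrR using fun j => (hslow j).exists_smoothing (hcont j)
  have hconsensus : Tendsto (fun t => y i t + R i t - mean fun j => y j t + R j t) atTop
      (nhds 0) := by
    refine tendsto_sub_mean_of_diffusion ha hconn hbal (w := fun k t => y k t + R k t)
      (p := fun k t => diffusion a (fun j => r j t - R j t) k + R' k t)
      (fun k => ?_) (fun k => ?_) i
    · filter_upwards [eventually_ge_atTop t₀] with t ht
      refine ((hy k t ht).fun_add (hR k t)).congr_deriv ?_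
      rw [← add_assoc, ← diffusion_add]
      simp only [add_add_sub_cancel]
    · simpa only [diffusion_zero, add_zero] using (tendsto_diffusion hrR k).add (hR' k)
  have herror := (hconsensus.add (hrR i)).sub (tendsto_mean hrR)
  simp only [mean_zero, add_zero, sub_zero] at herror
  refine herror.congr' ?_
  filter_upwards [eventually_ge_atTop t₀] with t ht
  have hmean_y : mean (fun j => y j t) = 0 := by
    rw [mean, sum_eq_of_hasDerivAt_diffusion hbal hy ht, hsum, smul_zero]
  have hmean_r : mean (fun j => r j t) = mean (fun j => R j t) + mean fun j => r j t - R j t := by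
    rw [← mean_add]
    simp only [add_sub_cancel]
  rw [mean_add, hmean_y, hmean_r]
  abel

section Invariance

variable {ι : Type*} [Fintype ι] {a : ι → ι → ℝ} {β : ℝ → ℝ}

lemma hasDerivAt_max_zero_sq (r : ℝ) : HasDerivAt (fun s : ℝ => max s 0 ^ 2) (2 * max r 0) r := by
  rcases lt_trichotomy r 0 with hr | rfl | hr
  · have heq : (fun s : ℝ => max s 0 ^ 2) =ᶠ[nhds r] fun _ => 0 := by
      filter_upwards [eventually_lt_nhds hr] with s hs
      simp [max_eq_right hs.le]
    simpa [max_eq_right hr.le] using (hasDerivAt_const r (0 : ℝ)).congr_of_eventuallyEq heq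
  · rw [hasDerivAt_iff_isLittleO]
    refine (Asymptotics.IsBigO.of_bound' (Eventually.of_forall fun s => ?_)).trans_isLittleO
      (Asymptotics.isLittleO_pow_sub_sub (0 : ℝ) one_lt_two)
    rcases le_total s 0 with hs | hs <;> simp [hs, sq_nonneg]
  · have heq : (fun s : ℝ => max s 0 ^ 2) =ᶠ[nhds r] fun s => s ^ 2 := by
      filter_upwards [eventually_gt_nhds hr] with s hs
      rw [max_eq_left hs.le]
    simpa [max_eq_left hr.le] using (hasDerivAt_pow 2 r).congr_of_eventuallyEq heq

lemma sum_max_zero_mul_diffusion_nonpos (ha : ∀ i j, 0 ≤ a i j) (hbal : WeightBalanced a)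
    (g : ι → ℝ) : ∑ i, max (g i) 0 * diffusion a g i ≤ 0 := by
  have hclip : ∀ i, max (g i) 0 * diffusion a g i
      ≤ max (g i) 0 * diffusion a (fun j => max (g j) 0) i := by
    intro i
    rcases le_total (g i) 0 with hi | hi
    · simp only [max_eq_right hi, zero_mul, le_refl]
    · simp only [max_eq_left hi, diffusion, smul_eq_mul]
      gcongr with j
      · exact ha i j
      · exact le_max_left _ _
  have henergy := two_mul_sum_inner_diffusion hbal fun i => max (g i) 0
  have hnonneg := disagreement_nonneg ha fun i => max (g i) 0
  simp only [Real.inner_apply] at henergy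
  linarith [Finset.sum_le_sum fun i (_ : i ∈ Finset.univ) => hclip i]

lemma nonpos_of_relaxed_diffusion (ha : ∀ i j, 0 ≤ a i j) (hbal : WeightBalanced a)
    (hβ : ∀ t ≥ 0, 0 ≤ β t) {g s : ι → ℝ → ℝ} (hs : ∀ i, ∀ t ≥ 0, s i t ≤ 0)
    (hg : ∀ i, ∀ t ≥ 0,
      HasDerivAt (g i) (diffusion a (fun j => g j t) i + β t * (s i t - g i t)) t)
    (hg₀ : ∀ i, g i 0 ≤ 0) (i : ι) {t : ℝ} (ht : 0 ≤ t) : g i t ≤ 0 := by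
  set V : ℝ → ℝ := fun t => ∑ i, max (g i t) 0 ^ 2
  have hderiv : ∀ t ≥ 0, HasDerivAt V (∑ i, 2 * max (g i t) 0 *
      (diffusion a (fun j => g j t) i + β t * (s i t - g i t))) t := fun t ht =>
    HasDerivAt.fun_sum fun i _ => (hasDerivAt_max_zero_sq (g i t)).comp t (hg i t ht)
  have hrelax : ∀ t ≥ 0, ∀ i, max (g i t) 0 * (β t * (s i t - g i t)) ≤ 0 := by
    intro t ht i
    rcases le_total (g i t) 0 with hi | hi
    · simp [hi]
    · exact mul_nonpos_of_nonneg_of_nonpos (le_max_right _ _)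
        (mul_nonpos_of_nonneg_of_nonpos (hβ t ht) (by linarith [hs i t ht]))
  have hanti : AntitoneOn V (Set.Ici 0) := by
    refine antitoneOn_of_hasDerivWithinAt_nonpos (convex_Ici 0)
      (fun t ht => (hderiv t ht).continuousAt.continuousWithinAt)
      (fun t ht => (hderiv t (interior_subset ht)).hasDerivWithinAt) fun t ht => ?_
    simp only [mul_assoc, mul_add, Finset.sum_add_distrib, ← Finset.mul_sum]
    linarith [sum_max_zero_mul_diffusion_nonpos ha hbal fun i => g i t,
      Finset.sum_nonpos fun i (_ : i ∈ Finset.univ) => hrelax t (interior_subset ht) i]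
  have hV₀ : V 0 = 0 := by simp [V, hg₀]
  have hsq : max (g i t) 0 ^ 2 ≤ 0 :=
    calc max (g i t) 0 ^ 2 ≤ V t := Finset.single_le_sum (f := fun i => max (g i t) 0 ^ 2)
          (fun i _ => sq_nonneg _) (Finset.mem_univ i)
      _ ≤ 0 := hV₀ ▸ hanti (Set.mem_Ici.2 le_rfl) ht ht
  exact max_eq_right_iff.1 (pow_eq_zero_iff two_ne_zero |>.1 (le_antisymm hsq (sq_nonneg _)))

variable {E : Type*} [NormedAddCommGroup E] [NormedSpace ℝ E] {Ω : Set E}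

theorem mem_of_relaxed_diffusion (ha : ∀ i j, 0 ≤ a i j) (hbal : WeightBalanced a)
    (hΩconv : Convex ℝ Ω) (hΩclosed : IsClosed Ω) (hβ : ∀ t ≥ 0, 0 ≤ β t) {x v : ι → ℝ → E}
    (hv : ∀ i, ∀ t ≥ 0, v i t ∈ Ω)
    (hx : ∀ i, ∀ t ≥ 0,
      HasDerivAt (x i) (diffusion a (fun j => x j t) i + β t • (v i t - x i t)) t)
    (hx₀ : ∀ i, x i 0 ∈ Ω) (i : ι) {t : ℝ} (ht : 0 ≤ t) : x i t ∈ Ω := by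
  by_contra hout
  obtain ⟨T, c, hTΩ, hTx⟩ := geometric_hahn_banach_closed_point hΩconv hΩclosed hout
  refine hTx.not_ge (sub_nonpos.1 ?_)
  refine nonpos_of_relaxed_diffusion ha hbal hβ (g := fun i t => T (x i t) - c)
    (s := fun i t => T (v i t) - c) (fun i t ht => sub_nonpos.2 (hTΩ _ (hv i t ht)).le)
    (fun i t ht => ?_) (fun i => sub_nonpos.2 (hTΩ _ (hx₀ i)).le) i ht
  refine ((T.hasFDerivAt.comp_hasDerivAt t (hx i t ht)).sub_const c).congr_deriv ?_
  rw [map_add, map_smul, map_sub, diffusion_sub_const, sub_sub_sub_cancel_right, smul_eq_mul]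
  exact congrArg (· + _) (map_diffusion T.toLinearMap a _ i)

end Invariance

theorem slowlyVarying_of_relaxed_diffusion {ι E : Type*} [Fintype ι] [NormedAddCommGroup E]
    [InnerProductSpace ℝ E] {a : ι → ι → ℝ} (ha : ∀ i j, 0 ≤ a i j) (hconn : StronglyConnected a)
    (hbal : WeightBalanced a) {Ω : Set E} (hΩ : Bornology.IsBounded Ω) {β : ℝ → ℝ}
    (hβ : Tendsto β atTop (nhds 0)) {x v : ι → ℝ → E} (hxΩ : ∀ i, ∀ᶠ t in atTop, x i t ∈ Ω)
    (hvΩ : ∀ i, ∀ᶠ t in atTop, v i t ∈ Ω)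
    (hx : ∀ i, ∀ᶠ t in atTop,
      HasDerivAt (x i) (diffusion a (fun j => x j t) i + β t • (v i t - x i t)) t) (i : ι) :
    SlowlyVarying (x i) := by
  obtain ⟨D, hD⟩ := hΩ.exists_norm_le
  have hforce : ∀ k, Tendsto (fun t => β t • (v k t - x k t)) atTop (nhds 0) := by
    refine fun k => NormedField.tendsto_zero_smul_of_tendsto_zero_of_bounded hβ
      (isBoundedUnder_of_eventually_le (a := D + D) ?_)
    filter_upwards [hxΩ k, hvΩ k] with t hxt hvt
    exact (norm_sub_le _ _).trans (add_le_add (hD _ hvt) (hD _ hxt))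
  have hdiffusion : Tendsto (fun t => diffusion a (fun j => x j t) i) atTop (nhds 0) := by
    simpa only [diffusion_sub_const, diffusion_zero] using
      tendsto_diffusion (a := a) (tendsto_sub_mean_of_diffusion ha hconn hbal hx hforce) i
  exact slowlyVarying_of_tendsto_deriv_zero (hx i) (by simpa using hdiffusion.add (hforce i))

end Consensus

open Consensus in
theorem theorem1_ii_gradient_tracking_general {ι E F : Type*} [Fintype ι]
    [NormedAddCommGroup E] [InnerProductSpace ℝ E] [NormedAddCommGroup F] [InnerProductSpace ℝ F]
    [CompleteSpace F] {a : ι → ι → ℝ} (ha : ∀ i j, 0 ≤ a i j) (hconn : StronglyConnected a)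
    (hbal : WeightBalanced a) {Ω : Set E} (hΩconv : Convex ℝ Ω) (hΩclosed : IsClosed Ω)
    (hΩbdd : Bornology.IsBounded Ω) {φ : ι → E → F} (hφ : ∀ i, UniformContinuousOn (φ i) Ω)
    {β : ℝ → ℝ} (hβ : ∀ t ≥ 0, 0 ≤ β t) (hβ₀ : Tendsto β atTop (nhds 0))
    {x v : ι → ℝ → E} {y z : ι → ℝ → F}
    (hx : ∀ i, ∀ t ≥ 0,
      HasDerivAt (x i) (diffusion a (fun j => x j t) i + β t • (v i t - x i t)) t)
    (hy : ∀ i, ∀ t ≥ 0, HasDerivAt (y i) (diffusion a (fun j => z j t) i) t)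
    (hz : ∀ i, ∀ t ≥ 0, z i t = y i t + φ i (x i t)) (hv : ∀ i, ∀ t ≥ 0, v i t ∈ Ω)
    (hx₀ : ∀ i, x i 0 ∈ Ω) (hy₀ : ∑ i, y i 0 = 0) (i : ι) :
    Tendsto (fun t => z i t - mean fun j => φ j (x j t)) atTop (nhds 0) := by
  have hxΩ : ∀ i, ∀ t ≥ 0, x i t ∈ Ω := fun i t ht =>
    mem_of_relaxed_diffusion ha hbal hΩconv hΩclosed hβ hv hx hx₀ i ht
  have hxΩ' : ∀ i, ∀ᶠ t in atTop, x i t ∈ Ω := fun i => eventually_atTop.2 ⟨0, hxΩ i⟩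
  have hslow : ∀ i, SlowlyVarying fun t => φ i (x i t) := fun i =>
    (slowlyVarying_of_relaxed_diffusion ha hconn hbal hΩbdd hβ₀ hxΩ'
      (fun j => eventually_atTop.2 ⟨0, hv j⟩) (fun j => eventually_atTop.2 ⟨0, hx j⟩)
      i).comp_uniformContinuousOn (hφ i) (hxΩ' i)
  have hcont : ∀ i, ContinuousOn (fun t => φ i (x i t)) (Set.Ici 0) := fun i =>
    (hφ i).continuousOn.comp
      (fun t ht => (hx i t ht).continuousAt.continuousWithinAt) (hxΩ i)
  have hy' : ∀ i, ∀ t ≥ 0,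
      HasDerivAt (y i) (diffusion a (fun j => y j t + φ j (x j t)) i) t := fun i t ht => by
    simpa only [hz _ t ht] using hy i t ht
  refine (tendsto_dynamic_average_consensus ha hconn hbal hy' hy₀ hcont hslow i).congr' ?_
  filter_upwards [eventually_ge_atTop 0] with t ht
  rw [hz i t ht]

/-- Theorem 1(ii) (global gradient tracking): along the distributed
projection-free dynamics (Algorithm 1) with initial conditions `x i 0 ∈ Ω`
and `y i 0 = 0`, each auxiliary variable `z i` asymptotically tracks the
global gradient `(1/N) ∑ j, ∇f j (x j t)`. -/
theorem theorem1_ii_gradient_tracking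
    (n N : ℕ) (hN : 0 < N)
    (a : Fin N → Fin N → ℝ)
    (ha_nonneg : ∀ i j, 0 ≤ a i j)
    (ha_conn : ∀ i j : Fin N, Relation.ReflTransGen (fun p q => 0 < a q p) i j)
    (ha_bal : ∀ i, ∑ j, a i j = ∑ j, a j i)
    (Ω : Set (EuclideanSpace ℝ (Fin n)))
    (hΩconv : Convex ℝ Ω) (hΩcpt : IsCompact Ω) (hΩne : Ω.Nonempty)
    (f : Fin N → EuclideanSpace ℝ (Fin n) → ℝ) (κ : ℝ) (hκ : 0 < κ)
    (hfconv : ∀ i, ConvexOn ℝ Set.univ (f i))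
    (hfdiff : ∀ i, Differentiable ℝ (f i))
    (hflip : ∀ i, ∀ p ∈ Ω, ∀ q ∈ Ω,
      ‖gradient (f i) p - gradient (f i) q‖ ≤ κ * ‖p - q‖)
    (β : ℝ → ℝ)
    (hβpos : ∀ t ≥ (0:ℝ), 0 < β t)
    (hβ0 : Tendsto β atTop (nhds 0))
    (hβdiv : Tendsto (fun t => ∫ τ in (0:ℝ)..t, β τ) atTop atTop)
    (x y z v : Fin N → ℝ → EuclideanSpace ℝ (Fin n))
    (hx : ∀ i, ∀ t ≥ (0:ℝ), HasDerivAt (x i)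
      (∑ j, a i j • (x j t - x i t) + β t • (v i t - x i t)) t)
    (hy : ∀ i, ∀ t ≥ (0:ℝ), HasDerivAt (y i) (∑ j, a i j • (z j t - z i t)) t)
    (hz : ∀ i, ∀ t ≥ (0:ℝ), z i t = y i t + gradient (f i) (x i t))
    (hv : ∀ i, ∀ t ≥ (0:ℝ), v i t ∈ Ω ∧ ∀ w ∈ Ω, ⟪z i t, v i t⟫ ≤ ⟪z i t, w⟫)
    (hx0 : ∀ i, x i 0 ∈ Ω) (hy0 : ∀ i, y i 0 = 0) :
    ∀ i : Fin N, Tendsto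
      (fun t => z i t - (N:ℝ)⁻¹ • ∑ j, gradient (f j) (x j t)) atTop (nhds 0) := by
  have huc : ∀ i, UniformContinuousOn (gradient (f i)) Ω := fun i =>
    (LipschitzOnWith.of_dist_le' fun p hp q hq => by
      simpa only [dist_eq_norm] using hflip i p hp q hq).uniformContinuousOn
  simpa [Consensus.mean] using theorem1_ii_gradient_tracking_general ha_nonneg ha_conn ha_bal
    hΩconv hΩcpt.isClosed hΩcpt.isBounded huc (fun t ht => (hβpos t ht).le) hβ0 hx hy hz
    (fun i t ht => (hv i t ht).1) hx0 (by simp [hy0])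
end

section
/- (Differential inequality (5) for the averaged objective) Along the distributed projection-free dynamics with x_i(t) ∈ Ω for all t, let x̄(t) = (1/N)∑_{i=1}^N x_i(t), let x* be an optimal solution of min_{x∈Ω} F(x) with F = (1/N)∑_i f_i, let V(t) = F(x̄(t)) − F(x*), let W(t) = z(t) − (1/N)1̂1̂ᵀ G(x(t)) be the stacked gradient-tracking error (where z = col{z_1,…,z_N}, G(x) = col{∇f_1(x_1),…,∇f_N(x_N)}, 1̂ = 1_N ⊗ I_n), and let c > 0 be a constant with ‖v(t) − x̄*‖ ≤ c for the stacked vectors v(t) = col{v_1(t),…,v_N(t)} and x̄* = col{x*,…,x*} (such c exists since Ω is compact). Then for all t ≥ 0, V̇(t) ≤ −β(t)V(t) + (cβ(t)/N)(‖W(t)‖ + κ‖x̄(t)·1 − x(t)‖), where x̄(t)·1 = col{x̄(t),…,x̄(t)} and x(t) = col{x_1(t),…,x_N(t)}. -/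
open Filter MeasureTheory
open scoped RealInnerProductSpace

/-!
Weight balance cancels the coupling terms in the average, so `x̄' = β (v̄ - x̄)` and
`V' = β ⟪∇F(x̄), v̄ - x̄⟫`. Split `v̄ - x̄ = (x* - x̄) + (v̄ - x*)`. The first part contributes at
most `-β V` by convexity. In the second, `v i` minimizes `⟪z i, ·⟫`, so replacing `z i` by `∇F(x̄)`
costs only the error `∇F(x̄) - z i`. By the Cauchy–Schwarz inequality on stacked vectors and the
triangle inequality, that error is controlled by the tracking error `‖W‖` and, through the Lipschitz
bound, the disagreement `‖x̄ · 1 - x‖`.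
-/

section ArithMean

variable {ι M E : Type*} [Fintype ι]

/-- The arithmetic mean `(1/N) ∑ i, u i` of a finite family of size `N`, as a linear map in the
family. Applied to points it is `x̄`; applied to the functions `f i`, it is the averaged objective
`F`. On the empty family it is `0`. -/
noncomputable def arithMean [AddCommGroup M] [Module ℝ M] : (ι → M) →ₗ[ℝ] M :=
  (Fintype.card ι : ℝ)⁻¹ • ∑ i, LinearMap.proj i

theorem arithMean_apply [AddCommGroup M] [Module ℝ M] (u : ι → M) :
    arithMean u = (Fintype.card ι : ℝ)⁻¹ • ∑ i, u i := by
  simp [arithMean]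

theorem arithMean_const [Nonempty ι] [AddCommGroup M] [Module ℝ M] (b : M) :
    arithMean (fun _ : ι => b) = b := by
  have hcard : (Fintype.card ι : ℝ) ≠ 0 := by positivity
  rw [arithMean_apply, Finset.sum_const, Finset.card_univ, ← Nat.cast_smul_eq_nsmul ℝ,
    inv_smul_smul₀ hcard]

theorem arithMean_mem_of_convex [Nonempty ι] [AddCommGroup M] [Module ℝ M] {s : Set M}
    (hs : Convex ℝ s) {u : ι → M} (hu : ∀ i, u i ∈ s) : arithMean u ∈ s := by
  rw [arithMean_apply, Finset.smul_sum]
  exact hs.sum_mem (fun _ _ => by positivity) (by simp) fun i _ => hu i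

theorem convexOn_arithMean [AddCommGroup M] [Module ℝ M] {s : Set M} (hs : Convex ℝ s)
    {f : ι → M → ℝ} (hf : ∀ i, ConvexOn ℝ s (f i)) : ConvexOn ℝ s (arithMean f) := by
  have hsum : ConvexOn ℝ s (∑ i, f i) :=
    Finset.sum_induction f (ConvexOn ℝ s) (fun _ _ => ConvexOn.add) (convexOn_const 0 hs)
      fun i _ => hf i
  rw [arithMean_apply]
  exact hsum.smul (by positivity)

theorem hasGradientAt_arithMean [NormedAddCommGroup E] [InnerProductSpace ℝ E] [CompleteSpace E]
    {f : ι → E → ℝ} {g : ι → E} {p : E} (hf : ∀ i, HasGradientAt (f i) (g i) p) :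
    HasGradientAt (arithMean f) (arithMean g) p := by
  rw [hasGradientAt_iff_hasFDerivAt, arithMean_apply, arithMean_apply, map_smul, map_sum]
  exact (HasFDerivAt.sum fun i _ => (hf i).hasFDerivAt).const_smul _

theorem inner_arithMean [NormedAddCommGroup E] [InnerProductSpace ℝ E] (g : E) (u : ι → E) :
    ⟪g, arithMean u⟫ = (Fintype.card ι : ℝ)⁻¹ * ∑ i, ⟪g, u i⟫ := by
  rw [arithMean_apply, real_inner_smul_right, inner_sum]

theorem norm_toLp_const_arithMean_le [SeminormedAddCommGroup E] [NormedSpace ℝ E] (u : ι → E) :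
    ‖WithLp.toLp 2 fun _ : ι => arithMean u‖ ≤ ‖WithLp.toLp 2 u‖ := by
  rcases isEmpty_or_nonempty ι with _ | _
  · simp [PiLp.norm_eq_of_L2]
  have hmean : ‖arithMean u‖ ≤ (Fintype.card ι : ℝ)⁻¹ * ∑ i, ‖u i‖ := by
    rw [arithMean_apply, norm_smul, Real.norm_of_nonneg (by positivity)]
    gcongr
    exact norm_sum_le _ _
  have hsq : (∑ i, ‖u i‖) ^ 2 ≤ Fintype.card ι * ∑ i, ‖u i‖ ^ 2 := sq_sum_le_card_mul_sum_sq
  rw [PiLp.norm_eq_of_L2, PiLp.norm_eq_of_L2]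
  refine Real.sqrt_le_sqrt ?_
  calc ∑ _i : ι, ‖arithMean u‖ ^ 2
      = Fintype.card ι * ‖arithMean u‖ ^ 2 := by simp
    _ ≤ Fintype.card ι * ((Fintype.card ι : ℝ)⁻¹ * ∑ i, ‖u i‖) ^ 2 := by gcongr
    _ = (Fintype.card ι : ℝ)⁻¹ * (∑ i, ‖u i‖) ^ 2 := by field_simp
    _ ≤ (Fintype.card ι : ℝ)⁻¹ * (Fintype.card ι * ∑ i, ‖u i‖ ^ 2) := by gcongr
    _ = ∑ i, ‖u i‖ ^ 2 := by field_simp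

end ArithMean

theorem sum_sum_smul_sub_eq_zero_of_balanced {ι R M : Type*} [Fintype ι] [Ring R]
    [AddCommGroup M] [Module R M] {a : ι → ι → R} (ha : ∀ i, ∑ j, a i j = ∑ j, a j i)
    (u : ι → M) : ∑ i, ∑ j, a i j • (u j - u i) = 0 := by
  simp only [smul_sub, Finset.sum_sub_distrib]
  rw [Finset.sum_comm, sub_eq_zero]
  simp only [← Finset.sum_smul, ha]

theorem hasDerivAt_arithMean_of_balanced {ι E : Type*} [Fintype ι] [NormedAddCommGroup E]
    [NormedSpace ℝ E] {a : ι → ι → ℝ} (ha : ∀ i, ∑ j, a i j = ∑ j, a j i) {x : ι → ℝ → E}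
    {v : ι → E} {b t : ℝ}
    (hx : ∀ i, HasDerivAt (x i) (∑ j, a i j • (x j t - x i t) + b • (v i - x i t)) t) :
    HasDerivAt (fun τ => arithMean fun i => x i τ)
      (b • (arithMean v - arithMean fun i => x i t)) t := by
  have hsum := (HasDerivAt.fun_sum fun i (_ : i ∈ Finset.univ) => hx i).fun_const_smul
    (Fintype.card ι : ℝ)⁻¹
  rw [Finset.sum_add_distrib, sum_sum_smul_sub_eq_zero_of_balanced ha fun i => x i t, zero_add,
    ← Finset.smul_sum, smul_comm, Finset.sum_sub_distrib, smul_sub] at hsum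
  simpa only [arithMean_apply] using hsum

section InnerProductSpace

variable {ι E : Type*} [Fintype ι] [NormedAddCommGroup E] [InnerProductSpace ℝ E]

theorem inner_sub_le_sub_of_convexOn [CompleteSpace E] {s : Set E} {f : E → ℝ} {g p q : E}
    (hf : ConvexOn ℝ s f) (hg : HasGradientAt f g p) (hp : p ∈ s) (hq : q ∈ s) :
    ⟪g, q - p⟫ ≤ f q - f p := by
  let γ : ℝ →ᵃ[ℝ] E := AffineMap.lineMap p q
  have hγ₀ : γ 0 = p := AffineMap.lineMap_apply_zero p q
  have hγ₁ : γ 1 = q := AffineMap.lineMap_apply_one p q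
  have hderiv : HasDerivAt (f ∘ γ) ⟪g, q - p⟫ 0 :=
    (hγ₀.symm ▸ hg.hasFDerivAt).comp_hasDerivAt 0 AffineMap.hasDerivAt_lineMap
  simpa [slope, hγ₀, hγ₁] using (hf.comp_affineMap γ).le_slope_of_hasDerivAt
    (by simpa [hγ₀] using hp) (by simpa [hγ₁] using hq) one_pos hderiv

theorem sum_inner_le_norm_toLp_mul (u w : ι → E) :
    ∑ i, ⟪u i, w i⟫ ≤ ‖WithLp.toLp 2 u‖ * ‖WithLp.toLp 2 w‖ := by
  simpa only [PiLp.inner_apply] using real_inner_le_norm (WithLp.toLp 2 u) (WithLp.toLp 2 w)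

theorem inner_arithMean_sub_le_of_inner_le [Nonempty ι] {z v : ι → E} {y : E}
    (hv : ∀ i, ⟪z i, v i⟫ ≤ ⟪z i, y⟫) (g : E) :
    ⟪g, arithMean v - y⟫ ≤ (Fintype.card ι : ℝ)⁻¹ *
      (‖WithLp.toLp 2 fun i => g - z i‖ * ‖WithLp.toLp 2 fun i => v i - y‖) := by
  have hmean : arithMean v - y = arithMean fun i => v i - y := by
    conv_lhs => rw [← arithMean_const (ι := ι) y]
    exact (map_sub arithMean v _).symm
  rw [hmean, inner_arithMean]
  gcongr
  calc ∑ i, ⟪g, v i - y⟫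
      ≤ ∑ i, ⟪g - z i, v i - y⟫ := by
        gcongr with i
        rw [inner_sub_left, inner_sub_right (z i)]
        linarith [hv i]
    _ ≤ _ := sum_inner_le_norm_toLp_mul _ _

end InnerProductSpace

theorem norm_toLp_le_mul_norm_toLp {ι E F : Type*} [Fintype ι] [SeminormedAddCommGroup E]
    [SeminormedAddCommGroup F] {u : ι → E} {w : ι → F} {κ : ℝ} (hκ : 0 ≤ κ)
    (h : ∀ i, ‖u i‖ ≤ κ * ‖w i‖) : ‖WithLp.toLp 2 u‖ ≤ κ * ‖WithLp.toLp 2 w‖ := by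
  rw [PiLp.norm_eq_of_L2, PiLp.norm_eq_of_L2, ← Real.sqrt_sq hκ, ← Real.sqrt_mul (sq_nonneg κ),
    Finset.mul_sum]
  gcongr with i
  rw [← mul_pow]
  gcongr
  exact h i

theorem norm_toLp_arithMean_sub_le {ι E F : Type*} [Fintype ι] [SeminormedAddCommGroup E]
    [NormedSpace ℝ E] [SeminormedAddCommGroup F] {g h : ι → E} {d : ι → F} {κ : ℝ} (hκ : 0 ≤ κ)
    (hgh : ∀ i, ‖g i - h i‖ ≤ κ * ‖d i‖) (z : ι → E) :
    ‖WithLp.toLp 2 fun i => arithMean g - z i‖ ≤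
      ‖WithLp.toLp 2 fun i => z i - arithMean h‖ + κ * ‖WithLp.toLp 2 d‖ := by
  have hmean : ‖WithLp.toLp 2 fun _ : ι => arithMean g - arithMean h‖ ≤ κ * ‖WithLp.toLp 2 d‖ := by
    rw [← map_sub]
    exact (norm_toLp_const_arithMean_le (g - h)).trans (norm_toLp_le_mul_norm_toLp hκ hgh)
  have hsplit : (WithLp.toLp 2 fun i => arithMean g - z i) =
      (WithLp.toLp 2 fun _ : ι => arithMean g - arithMean h) -
        WithLp.toLp 2 fun i => z i - arithMean h := by
    ext i
    simp
  rw [hsplit, add_comm]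
  exact (norm_sub_le _ _).trans (by gcongr)

theorem averaged_objective_differential_inequality_general
    {ι E : Type*} [Fintype ι] [Nonempty ι]
    [NormedAddCommGroup E] [InnerProductSpace ℝ E] [CompleteSpace E]
    {a : ι → ι → ℝ} (ha : ∀ i, ∑ j, a i j = ∑ j, a j i)
    {Ω : Set E} (hΩ : Convex ℝ Ω)
    {f : ι → E → ℝ} (hfconv : ∀ i, ConvexOn ℝ Ω (f i))
    (hfdiff : ∀ i, ∀ p ∈ Ω, DifferentiableAt ℝ (f i) p)
    {κ : ℝ} (hκ : 0 ≤ κ)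
    (hflip : ∀ i, ∀ p ∈ Ω, ∀ q ∈ Ω, ‖gradient (f i) p - gradient (f i) q‖ ≤ κ * ‖p - q‖)
    {x : ι → ℝ → E} {z v : ι → E} {b t : ℝ} (hb : 0 ≤ b)
    (hx : ∀ i, HasDerivAt (x i) (∑ j, a i j • (x j t - x i t) + b • (v i - x i t)) t)
    (hxΩ : ∀ i, x i t ∈ Ω)
    (hv : ∀ i, IsMinOn (fun w => ⟪z i, w⟫) Ω (v i))
    {y : E} (hy : y ∈ Ω) {c : ℝ} (hc : ‖WithLp.toLp 2 fun i => v i - y‖ ≤ c) :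
    ∃ d : ℝ,
      HasDerivAt (fun τ => arithMean f (arithMean fun k => x k τ) - arithMean f y) d t ∧
      d ≤ -b * (arithMean f (arithMean fun k => x k t) - arithMean f y)
          + c * b / Fintype.card ι *
            (‖WithLp.toLp 2 fun i => z i - arithMean fun j => gradient (f j) (x j t)‖
              + κ * ‖WithLp.toLp 2 fun i => (arithMean fun k => x k t) - x i t‖) := by
  set xbar := arithMean fun k => x k t
  set g := arithMean fun i => gradient (f i) xbar
  set error := ‖WithLp.toLp 2 fun i => z i - arithMean fun j => gradient (f j) (x j t)‖
    + κ * ‖WithLp.toLp 2 fun i => xbar - x i t‖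
  have hxbar : xbar ∈ Ω := arithMean_mem_of_convex hΩ hxΩ
  have hgrad : HasGradientAt (arithMean f) g xbar :=
    hasGradientAt_arithMean fun i => (hfdiff i xbar hxbar).hasGradientAt
  have hderiv := hgrad.hasFDerivAt.comp_hasDerivAt t (hasDerivAt_arithMean_of_balanced ha hx)
  refine ⟨_, hderiv.sub_const _, ?_⟩
  have hdescent : ⟪g, y - xbar⟫ ≤ arithMean f y - arithMean f xbar :=
    inner_sub_le_sub_of_convexOn (convexOn_arithMean hΩ hfconv) hgrad hxbar hy
  have herror : ‖WithLp.toLp 2 fun i => g - z i‖ ≤ error :=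
    norm_toLp_arithMean_sub_le hκ (fun i => hflip i _ hxbar _ (hxΩ i)) z
  have horacle : ⟪g, arithMean v - y⟫ ≤ (Fintype.card ι : ℝ)⁻¹ * (error * c) :=
    (inner_arithMean_sub_le_of_inner_le (fun i => hv i hy) g).trans (by gcongr)
  calc ⟪g, b • (arithMean v - xbar)⟫
      = b * (⟪g, y - xbar⟫ + ⟪g, arithMean v - y⟫) := by
        rw [real_inner_smul_right, ← inner_add_right, add_comm, sub_add_sub_cancel]
    _ ≤ b * ((arithMean f y - arithMean f xbar) + (Fintype.card ι : ℝ)⁻¹ * (error * c)) := by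
        gcongr
    _ = -b * (arithMean f xbar - arithMean f y) + c * b / Fintype.card ι * error := by ring

/-- Differential inequality (5) for the averaged objective: along the
distributed projection-free dynamics with `x i t ∈ Ω` for all `t ≥ 0`, letting
`x̄ t = (1/N) ∑ i, x i t`, `x*` an optimal solution of `min_{x ∈ Ω} F x` with
`F = (1/N) ∑ i, f i`, `V t = F (x̄ t) - F x*`, `W t` the stacked
gradient-tracking error (component `i`: `z i t - (1/N) ∑ j, ∇f j (x j t)`),
and `c > 0` a bound on the stacked norm `‖v t - x̄*‖`, one has
`V̇ t ≤ -β t * V t + (c β t / N)(‖W t‖ + κ ‖x̄ t · 1 - x t‖)`. -/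
theorem averaged_objective_differential_inequality
    (n N : ℕ) (hN : 0 < N)
    (a : Fin N → Fin N → ℝ)
    (ha_nonneg : ∀ i j, 0 ≤ a i j)
    (ha_conn : ∀ i j : Fin N, Relation.ReflTransGen (fun p q => 0 < a q p) i j)
    (ha_bal : ∀ i, ∑ j, a i j = ∑ j, a j i)
    (Ω : Set (EuclideanSpace ℝ (Fin n)))
    (hΩconv : Convex ℝ Ω) (hΩcpt : IsCompact Ω) (hΩne : Ω.Nonempty)
    (f : Fin N → EuclideanSpace ℝ (Fin n) → ℝ) (κ : ℝ) (hκ : 0 < κ)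
    (hfconv : ∀ i, ConvexOn ℝ Set.univ (f i))
    (hfdiff : ∀ i, Differentiable ℝ (f i))
    (hflip : ∀ i, ∀ p ∈ Ω, ∀ q ∈ Ω,
      ‖gradient (f i) p - gradient (f i) q‖ ≤ κ * ‖p - q‖)
    (β : ℝ → ℝ)
    (hβpos : ∀ t ≥ (0:ℝ), 0 < β t)
    (x y z v : Fin N → ℝ → EuclideanSpace ℝ (Fin n))
    (hx : ∀ i, ∀ t ≥ (0:ℝ), HasDerivAt (x i)
      (∑ j, a i j • (x j t - x i t) + β t • (v i t - x i t)) t)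
    (hy : ∀ i, ∀ t ≥ (0:ℝ), HasDerivAt (y i) (∑ j, a i j • (z j t - z i t)) t)
    (hz : ∀ i, ∀ t ≥ (0:ℝ), z i t = y i t + gradient (f i) (x i t))
    (hv : ∀ i, ∀ t ≥ (0:ℝ), v i t ∈ Ω ∧ ∀ w ∈ Ω, ⟪z i t, v i t⟫ ≤ ⟪z i t, w⟫)
    (hx0 : ∀ i, x i 0 ∈ Ω) (hy0 : ∀ i, y i 0 = 0)
    (hxΩ : ∀ i, ∀ t ≥ (0:ℝ), x i t ∈ Ω)
    (xstar : EuclideanSpace ℝ (Fin n))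
    (hxstar : xstar ∈ Ω ∧ ∀ w ∈ Ω, (N:ℝ)⁻¹ * ∑ i, f i xstar ≤ (N:ℝ)⁻¹ * ∑ i, f i w)
    (c : ℝ) (hc : 0 < c)
    (hcbound : ∀ t ≥ (0:ℝ), Real.sqrt (∑ i, ‖v i t - xstar‖^2) ≤ c) :
    ∀ t ≥ (0:ℝ), ∃ d : ℝ,
      HasDerivAt (fun τ =>
        (N:ℝ)⁻¹ * ∑ i, f i ((N:ℝ)⁻¹ • ∑ k, x k τ) - (N:ℝ)⁻¹ * ∑ i, f i xstar) d t ∧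
      d ≤ -β t * ((N:ℝ)⁻¹ * ∑ i, f i ((N:ℝ)⁻¹ • ∑ k, x k t)
            - (N:ℝ)⁻¹ * ∑ i, f i xstar)
          + c * β t / N *
            (Real.sqrt (∑ i, ‖z i t - (N:ℝ)⁻¹ • ∑ j, gradient (f j) (x j t)‖^2)
              + κ * Real.sqrt (∑ i, ‖(N:ℝ)⁻¹ • ∑ k, x k t - x i t‖^2)) := by
  intro t ht
  have : NeZero N := ⟨hN.ne'⟩
  simpa only [arithMean_apply, Pi.smul_apply, Finset.sum_apply, smul_eq_mul, Fintype.card_fin,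
    PiLp.norm_eq_of_L2] using
    averaged_objective_differential_inequality_general ha_bal hΩconv
      (fun i => (hfconv i).subset (Set.subset_univ Ω) hΩconv) (fun i p _ => hfdiff i p) hκ.le hflip
      (hβpos t ht).le (fun i => hx i t ht) (fun i => hxΩ i t ht)
      (fun i => isMinOn_iff.mpr (hv i t ht).2) hxstar.1
      ((PiLp.norm_eq_of_L2 _).trans_le (hcbound t ht))
end

section
/- (Objective value convergence of the average) Along the distributed projection-free dynamics with initial conditions x_i(0) ∈ Ω and y_i(0) = 0, the averaged objective value converges to the optimal value: with x̄(t) = (1/N)∑_{i=1}^N x_i(t) and F(x) = (1/N)∑_{i=1}^N f_i(x), one has F(x̄(t)) → min_{x∈Ω} F(x) as t → ∞. -/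
open Filter MeasureTheory
open scoped RealInnerProductSpace

/-!
The network mean `x̄` obeys `x̄' = β (v̄ - x̄)`, because a weight-balanced coupling preserves means.
Coupling together with strong connectivity contracts the deviations from the mean, so they vanish
as soon as the perturbation does. Applied to `x`, whose perturbation `β (v - x)` tends to `0`, this
gives `x i - x̄ → 0`. The tracker `z = y + ∇f(x)` would be treated in the same way if `∇f(x)` were
differentiable in time; it is only slowly varying, so it is first averaged over unit time windows,
which makes it differentiable with vanishing derivative. Hence every `z i` approaches `∇F(x̄)`, the
averaged direction `v̄` is asymptotically a Frank-Wolfe direction for `F` at `x̄`, and the gap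
`V = F(x̄) - inf F` satisfies `V' ≤ -β (V - e)` with `e → 0`; since `∫ β = ∞`, it tends to `0`.
-/

section ProjectionFree

open Set Topology
open scoped NNReal

section MeanAndDeviation

variable {ι E : Type*} [Fintype ι] [NormedAddCommGroup E] [NormedSpace ℝ E]

/-- The network mean `x̄ = (1/N) ∑ i, x i` of the stacked states, as a continuous linear map. -/
noncomputable def agentMean : (ι → E) →L[ℝ] E :=
  (Fintype.card ι : ℝ)⁻¹ • ∑ i, ContinuousLinearMap.proj i

/-- The disagreement vector, with entries `x i - x̄`, as a continuous linear map of the stacked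
states. -/
noncomputable def deviation : (ι → E) →L[ℝ] (ι → E) :=
  .id ℝ _ - .pi fun _ => agentMean

theorem agentMean_apply (u : ι → E) : agentMean u = (Fintype.card ι : ℝ)⁻¹ • ∑ i, u i := by
  simp [agentMean]

theorem deviation_apply (u : ι → E) : deviation u = u - Function.const ι (agentMean u) := rfl

section Nonempty

variable [Nonempty ι]

theorem agentMean_const (c : E) : agentMean (Function.const ι c) = c := by
  simp [agentMean_apply, ← Nat.cast_smul_eq_nsmul ℝ, smul_smul]

theorem agentMean_deviation (u : ι → E) : agentMean (deviation u) = 0 := by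
  rw [deviation_apply, map_sub, agentMean_const, sub_self]

theorem sum_eq_zero_of_agentMean_eq_zero {u : ι → E} (hu : agentMean u = 0) : ∑ i, u i = 0 := by
  simpa [agentMean_apply] using hu

theorem agentMean_mem_of_convex {s : Set E} (hs : Convex ℝ s) {u : ι → E} (hu : ∀ i, u i ∈ s) :
    agentMean u ∈ s := by
  rw [agentMean_apply, Finset.smul_sum]
  exact hs.sum_mem (fun _ _ => by positivity) (by simp) fun i _ => hu i

end Nonempty

end MeanAndDeviation

section Diffusion

variable {ι E : Type*} [Fintype ι] [NormedAddCommGroup E] [NormedSpace ℝ E]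

/-- The consensus coupling `∑ j, a i j • (x j - x i)`, that is, minus the graph Laplacian of the
weights `a`, as a continuous linear map of the stacked states. -/
noncomputable def diffusion (a : ι → ι → ℝ) : (ι → E) →L[ℝ] (ι → E) :=
  .pi fun i => ∑ j, a i j • (.proj j - .proj i)

theorem diffusion_apply (a : ι → ι → ℝ) (u : ι → E) (i : ι) :
    diffusion a u i = ∑ j, a i j • (u j - u i) := by
  simp [diffusion]

theorem diffusion_deviation (a : ι → ι → ℝ) (u : ι → E) :
    diffusion a (deviation u) = diffusion a u := by
  ext i
  simp only [diffusion_apply, deviation_apply, Pi.sub_apply, Function.const_apply,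
    sub_sub_sub_cancel_right]

theorem sum_diffusion {a : ι → ι → ℝ} (ha : ∀ i, ∑ j, a i j = ∑ j, a j i) (u : ι → E) :
    ∑ i, diffusion a u i = 0 := by
  simp only [diffusion_apply, smul_sub, Finset.sum_sub_distrib]
  rw [Finset.sum_comm]
  simp only [← Finset.sum_smul, ha, sub_self]

theorem agentMean_diffusion {a : ι → ι → ℝ} (ha : ∀ i, ∑ j, a i j = ∑ j, a j i) (u : ι → E) :
    agentMean (diffusion a u) = 0 := by
  rw [agentMean_apply, sum_diffusion ha, smul_zero]

theorem deviation_diffusion {a : ι → ι → ℝ} (ha : ∀ i, ∑ j, a i j = ∑ j, a j i) (u : ι → E) :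
    deviation (diffusion a u) = diffusion a u := by
  rw [deviation_apply, agentMean_diffusion ha, Function.const_zero, sub_zero]

end Diffusion

section Network

variable {ι E : Type*} [Fintype ι]

/-- The weights of a strongly connected, weight-balanced digraph; `a q p > 0` means that `q`
receives information from `p`. -/
structure IsBalancedNetwork (a : ι → ι → ℝ) : Prop where
  nonneg : ∀ i j, 0 ≤ a i j
  connected : ∀ i j, Relation.ReflTransGen (fun p q => 0 < a q p) i j
  balanced : ∀ i, ∑ j, a i j = ∑ j, a j i

/-- The Dirichlet form `∑ k, ∑ l, a k l ‖u l - u k‖²` of the weighted digraph `a`: the rate at which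
the coupling dissipates `∑ i, ‖u i‖²`. -/
def dirichletForm [NormedAddCommGroup E] (a : ι → ι → ℝ) (u : ι → E) : ℝ :=
  ∑ k, ∑ l, a k l * ‖u l - u k‖ ^ 2

section Normed

variable [NormedAddCommGroup E] {a : ι → ι → ℝ}

theorem dirichletForm_nonneg (ha : ∀ i j, 0 ≤ a i j) (u : ι → E) : 0 ≤ dirichletForm a u :=
  Finset.sum_nonneg fun k _ => Finset.sum_nonneg fun l _ => mul_nonneg (ha k l) (sq_nonneg _)

theorem mul_norm_sub_sq_le_dirichletForm (ha : ∀ i j, 0 ≤ a i j) (u : ι → E) (k l : ι) :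
    a k l * ‖u l - u k‖ ^ 2 ≤ dirichletForm a u := by
  have hterm (k l : ι) : 0 ≤ a k l * ‖u l - u k‖ ^ 2 := mul_nonneg (ha k l) (sq_nonneg _)
  calc a k l * ‖u l - u k‖ ^ 2
      ≤ ∑ l, a k l * ‖u l - u k‖ ^ 2 :=
        Finset.single_le_sum (f := fun l => a k l * ‖u l - u k‖ ^ 2) (fun l _ => hterm k l)
          (Finset.mem_univ l)
    _ ≤ dirichletForm a u :=
        Finset.single_le_sum (f := fun k => ∑ l, a k l * ‖u l - u k‖ ^ 2)
          (fun k _ => Finset.sum_nonneg fun l _ => hterm k l) (Finset.mem_univ k)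

theorem exists_norm_sub_sq_le_mul_dirichletForm (ha : ∀ i j, 0 ≤ a i j) {i j : ι}
    (hij : Relation.ReflTransGen (fun p q => 0 < a q p) i j) :
    ∃ C ≥ 0, ∀ u : ι → E, ‖u i - u j‖ ^ 2 ≤ C * dirichletForm a u := by
  induction hij with
  | refl => exact ⟨0, le_rfl, fun u => by simp⟩
  | @tail b c _ hbc ih =>
    obtain ⟨C, hC, hib⟩ := ih
    refine ⟨2 * (C + (a c b)⁻¹), by positivity, fun u => ?_⟩
    have hedge : ‖u b - u c‖ ^ 2 ≤ (a c b)⁻¹ * dirichletForm a u :=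
      (le_inv_mul_iff₀ hbc).2 (mul_norm_sub_sq_le_dirichletForm ha u c b)
    calc ‖u i - u c‖ ^ 2
        ≤ (‖u i - u b‖ + ‖u b - u c‖) ^ 2 := by
          gcongr
          exact norm_sub_le_norm_sub_add_norm_sub _ _ _
      _ ≤ 2 * (‖u i - u b‖ ^ 2 + ‖u b - u c‖ ^ 2) := add_sq_le
      _ ≤ 2 * (C * dirichletForm a u + (a c b)⁻¹ * dirichletForm a u) := by
          gcongr
          exact hib u
      _ = 2 * (C + (a c b)⁻¹) * dirichletForm a u := by ring

end Normed

section Inner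

variable [NormedAddCommGroup E] [InnerProductSpace ℝ E] {a : ι → ι → ℝ}

theorem sum_two_mul_inner_diffusion (ha : ∀ i, ∑ j, a i j = ∑ j, a j i) (u : ι → E) :
    ∑ i, 2 * ⟪u i, diffusion a u i⟫ = -dirichletForm a u := by
  have hterm (i j : ι) : 2 * (a i j * ⟪u i, u j - u i⟫) =
      a i j • (‖u j‖ ^ 2 - ‖u i‖ ^ 2) - a i j * ‖u j - u i‖ ^ 2 := by
    rw [norm_sub_sq_real, inner_sub_right, real_inner_self_eq_norm_sq, real_inner_comm (u i),
      smul_eq_mul]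
    ring
  have hrow (i : ι) : 2 * ⟪u i, diffusion a u i⟫ =
      diffusion a (fun k => ‖u k‖ ^ 2) i - ∑ j, a i j * ‖u j - u i‖ ^ 2 := by
    simp only [diffusion_apply, inner_sum, inner_smul_right, Finset.mul_sum, hterm,
      Finset.sum_sub_distrib]
  simp only [hrow, Finset.sum_sub_distrib, sum_diffusion ha, zero_sub, dirichletForm]

theorem sum_norm_sq_le_sum_norm_sub_sq {u : ι → E} (hu : ∑ i, u i = 0) (w : E) :
    ∑ i, ‖u i‖ ^ 2 ≤ ∑ i, ‖u i - w‖ ^ 2 := by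
  have hcross : ∑ i, 2 * ⟪u i, w⟫ = 0 := by
    rw [← Finset.mul_sum, ← sum_inner, hu, inner_zero_left, mul_zero]
  have hw : 0 ≤ ∑ _i : ι, ‖w‖ ^ 2 := by positivity
  simp only [norm_sub_sq_real, Finset.sum_add_distrib, Finset.sum_sub_distrib, hcross]
  linarith

theorem IsBalancedNetwork.exists_mul_sum_norm_sq_le_dirichletForm [Nonempty ι]
    (ha : IsBalancedNetwork a) :
    ∃ c > 0, ∀ u : ι → E, agentMean u = 0 → c * ∑ i, ‖u i‖ ^ 2 ≤ dirichletForm a u := by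
  obtain ⟨k⟩ := ‹Nonempty ι›
  choose C hC hpair using fun i =>
    exists_norm_sub_sq_le_mul_dirichletForm (E := E) ha.nonneg (ha.connected i k)
  have hCsum : 0 ≤ ∑ i, C i := Finset.sum_nonneg fun i _ => hC i
  refine ⟨(1 + ∑ i, C i)⁻¹, by positivity, fun u hu => ?_⟩
  rw [inv_mul_le_iff₀ (by positivity)]
  have : Nonempty ι := ⟨k⟩
  calc ∑ i, ‖u i‖ ^ 2
      ≤ ∑ i, ‖u i - u k‖ ^ 2 :=
        sum_norm_sq_le_sum_norm_sub_sq (sum_eq_zero_of_agentMean_eq_zero hu) _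
    _ ≤ ∑ i, C i * dirichletForm a u := Finset.sum_le_sum fun i _ => hpair i u
    _ = (∑ i, C i) * dirichletForm a u := (Finset.sum_mul ..).symm
    _ ≤ (1 + ∑ i, C i) * dirichletForm a u := by
        have := dirichletForm_nonneg ha.nonneg u
        gcongr
        linarith

end Inner

end Network

section Comparison

theorem le_of_forall_deriv_neg_of_eq {ι : Type*} [Finite ι] {u u' : ℝ → ι → ℝ} {b : ι → ℝ} {T : ℝ}
    (hu : ∀ t ≥ T, HasDerivAt u (u' t) t) (hT : u T ≤ b)
    (hneg : ∀ t ≥ T, u t ≤ b → ∀ i, u t i = b i → u' t i < 0) :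
    ∀ t ≥ T, u t ≤ b := by
  have := Fintype.ofFinite ι
  intro t ht
  suffices hsub : Icc T t ⊆ {s | u s ≤ b} from hsub ⟨ht, le_rfl⟩
  refine IsClosed.Icc_subset_of_forall_exists_gt ?_ hT ?_
  · have hcont : ContinuousOn u (Icc T t) := fun s hs =>
      (hu s hs.1).continuousAt.continuousWithinAt
    rw [inter_comm]
    exact hcont.preimage_isClosed_of_isClosed isClosed_Icc isClosed_Iic
  · rintro s ⟨hs, hsT, -⟩ r hr
    have hderiv (i : ι) : HasDerivAt (fun s => u s i) (u' s i) s := hasDerivAt_pi.1 (hu s hsT) i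
    have hright : ∀ᶠ q in 𝓝[>] s, u q ≤ b := by
      refine eventually_all.2 fun i => ?_
      rcases (hs i).lt_or_eq with hlt | heq
      · exact ((hderiv i).continuousAt.eventually (gt_mem_nhds hlt)).filter_mono
          nhdsWithin_le_nhds |>.mono fun q hq => hq.le
      · filter_upwards [(hderiv i).hasDerivWithinAt.limsup_slope_le' self_notMem_Ioi
          (hneg s hsT hs i heq), self_mem_nhdsWithin] with q hslope hq
        have hdiff : u q i - u s i < 0 := by
          rwa [slope_def_field, div_lt_iff₀ (sub_pos.2 hq), zero_mul] at hslope
        linarith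
    exact (hright.and (Ioc_mem_nhdsGT hr)).exists

variable {β : ℝ → ℝ}

theorem intervalIntegrable_of_tendsto_integral_atTop
    (hβ : Tendsto (fun t => ∫ τ in (0 : ℝ)..t, β τ) atTop atTop) {s t : ℝ} (hs : 0 ≤ s)
    (ht : 0 ≤ t) : IntervalIntegrable β volume s t := by
  -- A non-integrable `β` would have integral `0` in Mathlib.
  obtain ⟨T, hint, hT⟩ :=
    ((hβ.eventually_gt_atTop 0).and (eventually_ge_atTop (max s t))).exists
  have hT0 : 0 ≤ T := hs.trans ((le_max_left s t).trans hT)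
  have h0T : IntervalIntegrable β volume 0 T :=
    not_imp_comm.1 intervalIntegral.integral_undef hint.ne'
  refine h0T.mono_set (uIcc_subset_uIcc ?_ ?_) <;> rw [uIcc_of_le hT0]
  · exact ⟨hs, (le_max_left s t).trans hT⟩
  · exact ⟨ht, (le_max_right s t).trans hT⟩

theorem frequently_le_of_deriv_le_neg_mul
    (hβ : Tendsto (fun t => ∫ τ in (0 : ℝ)..t, β τ) atTop atTop) {V V' : ℝ → ℝ}
    (hV : ∀ᶠ t in atTop, HasDerivAt V (V' t) t) (hV0 : ∀ᶠ t in atTop, 0 ≤ V t) {ε r : ℝ}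
    (hε : 0 < ε) (hd : ∀ᶠ t in atTop, r < V t → V' t ≤ -ε * β t) :
    ∃ᶠ t in atTop, V t ≤ r := by
  intro hgt
  obtain ⟨T, hT⟩ := eventually_atTop.1
    (hV.and (hV0.and (hd.and (hgt.and (eventually_ge_atTop (0 : ℝ))))))
  have hT0 : 0 ≤ T := (hT T le_rfl).2.2.2.2
  have hle : ∀ t ≥ T, ε * ∫ τ in T..t, β τ ≤ V T := by
    intro t ht
    have hint := intervalIntegrable_of_tendsto_integral_atTop hβ hT0 (hT0.trans ht)
    have hdecay := intervalIntegral.sub_le_integral_of_hasDeriv_right_of_le (g := V) (g' := V')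
      (φ := fun τ => -ε * β τ) ht
      (fun s hs => (hT s hs.1).1.continuousAt.continuousWithinAt)
      (fun s hs => (hT s hs.1.le).1.hasDerivWithinAt)
      ((intervalIntegrable_iff_integrableOn_Icc_of_le ht).1 (hint.const_mul _))
      (fun s hs => (hT s hs.1.le).2.2.1 (not_le.1 (hT s hs.1.le).2.2.2.1))
    rw [intervalIntegral.integral_const_mul] at hdecay
    linarith [(hT t ht).2.1]
  obtain ⟨t, hlarge, htT⟩ := ((hβ.eventually_gt_atTop
    ((∫ τ in (0 : ℝ)..T, β τ) + V T / ε)).and (eventually_ge_atTop T)).exists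
  have hsplit := intervalIntegral.integral_add_adjacent_intervals
    (intervalIntegrable_of_tendsto_integral_atTop hβ le_rfl hT0)
    (intervalIntegrable_of_tendsto_integral_atTop hβ hT0 (hT0.trans htT))
  have hexceeds : V T / ε < ∫ τ in T..t, β τ := by linarith
  rw [div_lt_iff₀' hε] at hexceeds
  exact (hle t htT).not_gt hexceeds

theorem tendsto_zero_of_deriv_le_neg_mul_sub {V V' e : ℝ → ℝ}
    (hβ : Tendsto (fun t => ∫ τ in (0 : ℝ)..t, β τ) atTop atTop) (hβpos : ∀ᶠ t in atTop, 0 < β t)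
    (hV : ∀ᶠ t in atTop, HasDerivAt V (V' t) t) (hV0 : ∀ᶠ t in atTop, 0 ≤ V t)
    (he : Tendsto e atTop (𝓝 0)) (hd : ∀ᶠ t in atTop, V' t ≤ -β t * (V t - e t)) :
    Tendsto V atTop (𝓝 0) := by
  have hbound : ∀ r > 0, ∀ᶠ t in atTop, V t ≤ r := by
    intro r hr
    have hdecay : ∀ᶠ t in atTop, r ≤ V t → V' t ≤ -(r / 2) * β t := by
      filter_upwards [hβpos, hd, he.eventually (gt_mem_nhds (half_pos hr))] with t hβt hdt het hrV
      nlinarith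
    have hfreq : ∃ᶠ t in atTop, V t ≤ r :=
      frequently_le_of_deriv_le_neg_mul hβ hV hV0 (half_pos hr)
        (hdecay.mono fun t ht hrV => ht hrV.le)
    obtain ⟨T, hT⟩ := eventually_atTop.1 (hV.and (hβpos.and hdecay))
    obtain ⟨t₁, hVt₁, ht₁⟩ := (hfreq.and_eventually (eventually_ge_atTop T)).exists
    filter_upwards [eventually_ge_atTop t₁] with t ht
    refine le_of_forall_deriv_neg_of_eq (u := fun t (_ : Unit) => V t)
      (u' := fun t _ => V' t) (b := fun _ => r) (T := t₁)
      (fun s hs => hasDerivAt_pi.2 fun _ => (hT s (ht₁.trans hs)).1) (fun _ => hVt₁)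
      (fun s hs _ _ hVs => ?_) t ht ()
    obtain ⟨-, hβs, hds⟩ := hT s (ht₁.trans hs)
    nlinarith [hds hVs.ge]
  refine tendsto_order.2 ⟨fun r hr => hV0.mono fun t ht => hr.trans_le ht, fun r hr => ?_⟩
  exact (hbound (r / 2) (half_pos hr)).mono fun t ht => ht.trans_lt (half_lt_self hr)

end Comparison

section Consensus

variable {ι E : Type*} [Fintype ι] {a : ι → ι → ℝ}

theorem mem_of_convex_of_hasDerivAt_diffusion [NormedAddCommGroup E] [NormedSpace ℝ E] {Ω : Set E}
    (hΩ : Convex ℝ Ω) (hΩc : IsClosed Ω) (ha : ∀ i j, 0 ≤ a i j) {β : ℝ → ℝ} {x v : ℝ → ι → E}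
    {T : ℝ} (hβ : ∀ t ≥ T, 0 < β t) (hv : ∀ t ≥ T, ∀ i, v t i ∈ Ω) (hxT : ∀ i, x T i ∈ Ω)
    (hx : ∀ t ≥ T, HasDerivAt x (diffusion a (x t) + β t • (v t - x t)) t) :
    ∀ t ≥ T, ∀ i, x t i ∈ Ω := by
  intro t ht i
  by_contra hout
  -- At a first exit through a supporting half-space both coupling and `β (v - x)` point inwards.
  obtain ⟨l, b, hlt, hgt⟩ := geometric_hahn_banach_closed_point hΩ hΩc hout
  refine hgt.not_ge (le_of_forall_deriv_neg_of_eq (u := fun t i => l (x t i)) (b := fun _ => b)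
    (fun s hs => hasDerivAt_pi.2 fun k =>
      l.hasFDerivAt.comp_hasDerivAt s (hasDerivAt_pi.1 (hx s hs) k))
    (fun k => (hlt _ (hxT k)).le) (fun s hs hle k hk => ?_) t ht i)
  have hcoupling : ∑ j, a k j * (l (x s j) - l (x s k)) ≤ 0 :=
    Finset.sum_nonpos fun j _ =>
      mul_nonpos_of_nonneg_of_nonpos (ha k j) (sub_nonpos.2 ((hle j).trans hk.ge))
  have hinward : β s * (l (v s k) - l (x s k)) < 0 :=
    mul_neg_of_pos_of_neg (hβ s hs) (sub_neg.2 ((hlt _ (hv s hs k)).trans_eq hk.symm))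
  simpa [diffusion_apply] using add_neg_of_nonpos_of_neg hcoupling hinward

variable [NormedAddCommGroup E] [InnerProductSpace ℝ E]

theorem sum_two_mul_inner_diffusion_add_le (ha : ∀ i, ∑ j, a i j = ∑ j, a j i) {c : ℝ} (hc : 0 < c)
    {u : ι → E} (hu : c * ∑ i, ‖u i‖ ^ 2 ≤ dirichletForm a u) (p : ι → E) :
    ∑ i, 2 * ⟪u i, (diffusion a u + p) i⟫ ≤
      -(c / 2) * (∑ i, ‖u i‖ ^ 2 - 4 / c ^ 2 * ∑ i, ‖p i‖ ^ 2) := by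
  have hyoung (i : ι) : 2 * ⟪u i, p i⟫ ≤ c / 2 * ‖u i‖ ^ 2 + 2 / c * ‖p i‖ ^ 2 := by
    have hsq : c / 2 * ‖u i‖ ^ 2 + 2 / c * ‖p i‖ ^ 2 - 2 * (‖u i‖ * ‖p i‖)
        = c / 2 * (‖u i‖ - 2 / c * ‖p i‖) ^ 2 := by
      field_simp
      ring
    have hnonneg : 0 ≤ c / 2 * (‖u i‖ - 2 / c * ‖p i‖) ^ 2 := by positivity
    linarith [real_inner_le_norm (u i) (p i)]
  calc ∑ i, 2 * ⟪u i, (diffusion a u + p) i⟫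
      = -dirichletForm a u + ∑ i, 2 * ⟪u i, p i⟫ := by
        simp only [Pi.add_apply, inner_add_right, mul_add, Finset.sum_add_distrib,
          sum_two_mul_inner_diffusion ha]
    _ ≤ -(c * ∑ i, ‖u i‖ ^ 2) + ∑ i, (c / 2 * ‖u i‖ ^ 2 + 2 / c * ‖p i‖ ^ 2) :=
        add_le_add (neg_le_neg hu) (Finset.sum_le_sum fun i _ => hyoung i)
    _ = -(c / 2) * (∑ i, ‖u i‖ ^ 2 - 4 / c ^ 2 * ∑ i, ‖p i‖ ^ 2) := by
        rw [Finset.sum_add_distrib, ← Finset.mul_sum, ← Finset.mul_sum]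
        field_simp
        ring

theorem IsBalancedNetwork.tendsto_zero_of_agentMean_eq_zero [Nonempty ι] (ha : IsBalancedNetwork a)
    {u p : ℝ → ι → E} (hu : ∀ᶠ t in atTop, HasDerivAt u (diffusion a (u t) + p t) t)
    (hmean : ∀ t, agentMean (u t) = 0) (hp : Tendsto p atTop (𝓝 0)) :
    Tendsto u atTop (𝓝 0) := by
  obtain ⟨c, hc, hcoercive⟩ := ha.exists_mul_sum_norm_sq_le_dirichletForm (E := E)
  have herr : Tendsto (fun t => 4 / c ^ 2 * ∑ i, ‖p t i‖ ^ 2) atTop (𝓝 0) := by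
    simpa using (tendsto_finsetSum Finset.univ fun i _ =>
      ((tendsto_pi_nhds.1 hp i).norm.pow 2)).const_mul (4 / c ^ 2)
  have hrate : Tendsto (fun t => ∫ _ in (0 : ℝ)..t, c / 2) atTop atTop := by
    simpa only [intervalIntegral.integral_const, sub_zero, smul_eq_mul, id_eq] using
      tendsto_id.atTop_mul_const (half_pos hc)
  have henergy : Tendsto (fun t => ∑ i, ‖u t i‖ ^ 2) atTop (𝓝 0) :=
    tendsto_zero_of_deriv_le_neg_mul_sub hrate (.of_forall fun _ => half_pos hc)
      (hu.mono fun t ht => HasDerivAt.fun_sum fun i _ => (hasDerivAt_pi.1 ht i).norm_sq)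
      (.of_forall fun t => by positivity) herr
      (.of_forall fun t =>
        sum_two_mul_inner_diffusion_add_le ha.balanced hc (hcoercive _ (hmean t)) (p t))
  refine tendsto_pi_nhds.2 fun i => squeeze_zero_norm (fun t => ?_) (by simpa using henergy.sqrt)
  exact Real.le_sqrt_of_sq_le <|
    Finset.single_le_sum (f := fun i => ‖u t i‖ ^ 2) (fun _ _ => sq_nonneg _) (Finset.mem_univ i)

theorem IsBalancedNetwork.tendsto_deviation [Nonempty ι] (ha : IsBalancedNetwork a)
    {u p : ℝ → ι → E} (hu : ∀ᶠ t in atTop, HasDerivAt u (diffusion a (u t) + p t) t)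
    (hp : Tendsto p atTop (𝓝 0)) :
    Tendsto (fun t => deviation (u t)) atTop (𝓝 0) := by
  refine ha.tendsto_zero_of_agentMean_eq_zero (p := fun t => deviation (p t)) ?_
    (fun t => agentMean_deviation _) ?_
  · filter_upwards [hu] with t ht
    simpa [Function.comp_def, diffusion_deviation, deviation_diffusion ha.balanced] using
      deviation.hasFDerivAt.comp_hasDerivAt t ht
  · simpa [Function.comp_def] using (deviation.continuous.tendsto 0).comp hp

end Consensus

section SlowlyVarying

variable {F : Type*} [NormedAddCommGroup F]

/-- The signal `g` varies by `o(1)` over the unit time window `[t, t + 1]` as `t → ∞`. -/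
def SlowlyVarying (g : ℝ → F) : Prop :=
  ∀ ε > 0, ∀ᶠ t in atTop, ∀ s ∈ Icc t (t + 1), ‖g s - g t‖ ≤ ε

theorem slowlyVarying_of_tendsto_deriv [NormedSpace ℝ F] {u u' : ℝ → F}
    (hu : ∀ᶠ t in atTop, HasDerivAt u (u' t) t) (hu' : Tendsto u' atTop (𝓝 0)) :
    SlowlyVarying u := by
  intro ε hε
  have hsmall : ∀ᶠ t in atTop, ‖u' t‖ < ε := by
    simpa using hu'.norm.eventually (gt_mem_nhds (by simpa using hε))
  obtain ⟨T, hT⟩ := eventually_atTop.1 (hu.and hsmall)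
  filter_upwards [eventually_ge_atTop T] with t ht s hs
  have hlip := (convex_Ici T).norm_image_sub_le_of_norm_hasDerivWithin_le
    (fun r hr => (hT r hr).1.hasDerivWithinAt) (fun r hr => (hT r hr).2.le) ht (ht.trans hs.1)
  have hlen : ‖s - t‖ ≤ 1 := by
    rw [Real.norm_of_nonneg (sub_nonneg.2 hs.1)]
    linarith [hs.2]
  exact hlip.trans (mul_le_of_le_one_right hε.le hlen)

theorem SlowlyVarying.comp_lipschitzOnWith {F' : Type*} [NormedAddCommGroup F'] {u : ℝ → F}
    (hu : SlowlyVarying u) {s : Set F} (hs : ∀ᶠ t in atTop, u t ∈ s) {K : ℝ≥0} {G : F → F'}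
    (hG : LipschitzOnWith K G s) : SlowlyVarying (G ∘ u) := by
  intro ε hε
  have hK : 0 < (K : ℝ) + 1 := by positivity
  obtain ⟨T, hT⟩ := eventually_atTop.1 hs
  filter_upwards [hu (ε / (K + 1)) (by positivity), eventually_ge_atTop T] with t ht hTt r hr
  calc ‖G (u r) - G (u t)‖
      ≤ K * ‖u r - u t‖ := hG.norm_sub_le (hT r (hTt.trans hr.1)) (hT t hTt)
    _ ≤ (K + 1) * (ε / (K + 1)) := by
        gcongr
        · linarith
        · exact ht r hr
    _ = ε := mul_div_cancel₀ ε hK.ne'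

theorem SlowlyVarying.tendsto_add_one_sub {g : ℝ → F} (hg : SlowlyVarying g) :
    Tendsto (fun t => g (t + 1) - g t) atTop (𝓝 0) := by
  refine NormedAddGroup.tendsto_nhds_zero.2 fun ε hε => ?_
  filter_upwards [hg (ε / 2) (half_pos hε)] with t ht
  exact (ht (t + 1) ⟨by linarith, le_rfl⟩).trans_lt (half_lt_self hε)

variable [NormedSpace ℝ F] [CompleteSpace F] {g : ℝ → F}

theorem hasDerivAt_integral_window {s : Set ℝ} (hs : IsOpen s) (hg : ContinuousOn g s) {t : ℝ}
    (ht : Icc t (t + 1) ⊆ s) :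
    HasDerivAt (fun t => ∫ r in t..t + 1, g r) (g (t + 1) - g t) t := by
  have hle : t ≤ t + 1 := by linarith
  have hl : t ∈ s := ht (left_mem_Icc.2 hle)
  have hr : t + 1 ∈ s := ht (right_mem_Icc.2 hle)
  have hint : IntervalIntegrable g volume t (t + 1) :=
    (hg.mono (by rwa [uIcc_of_le hle])).intervalIntegrable
  have hendpoints : HasDerivAt (fun t : ℝ => (t, t + 1)) ((1 : ℝ), (1 : ℝ)) t :=
    (hasDerivAt_id t).prodMk ((hasDerivAt_id t).add_const 1)
  simpa [Function.comp_def] using (intervalIntegral.integral_hasFDerivAt hint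
    (hg.stronglyMeasurableAtFilter hs t hl) (hg.stronglyMeasurableAtFilter hs (t + 1) hr)
    (hg.continuousAt (hs.mem_nhds hl)) (hg.continuousAt (hs.mem_nhds hr))).comp_hasDerivAt t
      hendpoints

theorem SlowlyVarying.tendsto_sub_integral_window (hslow : SlowlyVarying g) {T : ℝ}
    (hg : ContinuousOn g (Ici T)) :
    Tendsto (fun t => g t - ∫ r in t..t + 1, g r) atTop (𝓝 0) := by
  refine NormedAddGroup.tendsto_nhds_zero.2 fun ε hε => ?_
  filter_upwards [hslow (ε / 2) (half_pos hε), eventually_ge_atTop T] with t hosc ht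
  have hle : t ≤ t + 1 := by linarith
  have hint : IntervalIntegrable g volume t (t + 1) :=
    (hg.mono (by rw [uIcc_of_le hle]; exact Icc_subset_Ici_self.trans (Ici_subset_Ici.2 ht)))
      |>.intervalIntegrable
  have hdiff : (∫ r in t..t + 1, g r) - g t = ∫ r in t..t + 1, (g r - g t) := by
    rw [intervalIntegral.integral_sub hint intervalIntegrable_const]
    simp
  have hnorm : ‖∫ r in t..t + 1, (g r - g t)‖ ≤ ε / 2 * |t + 1 - t| :=
    intervalIntegral.norm_integral_le_of_norm_le_const fun r hr =>
      hosc r (Ioc_subset_Icc_self (by rwa [uIoc_of_le hle] at hr))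
  rw [norm_sub_rev, hdiff]
  simp only [add_sub_cancel_left, abs_one, mul_one] at hnorm
  linarith

end SlowlyVarying

section Tracking

variable {ι E : Type*} [Fintype ι] [NormedAddCommGroup E] [InnerProductSpace ℝ E]
  {a : ι → ι → ℝ} {y g : ℝ → ι → E}

theorem IsBalancedNetwork.tendsto_deviation_tracker [Nonempty ι] [CompleteSpace E]
    (ha : IsBalancedNetwork a) {T : ℝ} (hg : ContinuousOn g (Ici T)) (hslow : SlowlyVarying g)
    (hy : ∀ᶠ t in atTop, HasDerivAt y (diffusion a (y t + g t)) t) :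
    Tendsto (fun t => deviation (y t + g t)) atTop (𝓝 0) := by
  set G : ℝ → ι → E := fun t => ∫ r in t..t + 1, g r
  have hgG : Tendsto (fun t => g t - G t) atTop (𝓝 0) := hslow.tendsto_sub_integral_window hg
  have hderiv : ∀ᶠ t in atTop, HasDerivAt (y + G)
      (diffusion a ((y + G) t) + (diffusion a (g t - G t) + (g (t + 1) - g t))) t := by
    filter_upwards [hy, eventually_gt_atTop T] with t hyt ht
    have hGt : HasDerivAt G (g (t + 1) - g t) t :=
      hasDerivAt_integral_window isOpen_Ioi (hg.mono Ioi_subset_Ici_self) fun r hr =>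
        ht.trans_le hr.1
    refine (hyt.add hGt).congr_deriv ?_
    rw [← add_assoc, ← map_add, Pi.add_apply, add_assoc (y t), add_sub_cancel]
  have hpert : Tendsto (fun t => diffusion a (g t - G t) + (g (t + 1) - g t)) atTop (𝓝 0) := by
    simpa using (((diffusion a).continuous.tendsto 0).comp hgG).add hslow.tendsto_add_one_sub
  have hsum := (ha.tendsto_deviation hderiv hpert).add ((deviation.continuous.tendsto 0).comp hgG)
  refine (hsum.congr fun t => ?_).trans_eq (by rw [map_zero, add_zero])
  rw [Function.comp_apply, ← map_add, Pi.add_apply, add_assoc, add_sub_cancel]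

theorem agentMean_eq_of_hasDerivAt_diffusion (ha : ∀ i, ∑ j, a i j = ∑ j, a j i) {z : ℝ → ι → E}
    {T : ℝ} (hy : ∀ t ≥ T, HasDerivAt y (diffusion a (z t)) t) :
    ∀ t ≥ T, agentMean (y t) = agentMean (y T) := by
  have hderiv : ∀ t ≥ T, HasDerivAt (fun t => agentMean (y t)) 0 t := fun t ht => by
    simpa [Function.comp_def, agentMean_diffusion ha] using
      agentMean.hasFDerivAt.comp_hasDerivAt t (hy t ht)
  exact fun t ht => constant_of_has_deriv_right_zero
    (fun s hs => (hderiv s hs.1).continuousAt.continuousWithinAt)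
    (fun s hs => (hderiv s hs.1).hasDerivWithinAt) t ⟨ht, le_rfl⟩

end Tracking

section AgentMeanBounds

variable {ι E : Type*} [Fintype ι]

theorem lipschitzOnWith_piMap [PseudoMetricSpace E] {Ω : Set E} {K : ℝ≥0}
    {f' : ι → E → E} (hf' : ∀ i, LipschitzOnWith K (f' i) Ω) :
    LipschitzOnWith K (Pi.map f') (univ.pi fun _ => Ω) := by
  refine .of_dist_le_mul fun u hu w hw => (dist_pi_le_iff (by positivity)).2 fun i => ?_
  calc dist (f' i (u i)) (f' i (w i))
      ≤ K * dist (u i) (w i) := (hf' i).dist_le_mul _ (hu i trivial) _ (hw i trivial)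
    _ ≤ K * dist u w := by gcongr; exact dist_le_pi_dist u w i

variable [NormedAddCommGroup E] [InnerProductSpace ℝ E]

theorem convexOn_agentMean {Ω : Set E} {f : ι → E → ℝ} (hf : ConvexOn ℝ Ω (∑ i, f i)) :
    ConvexOn ℝ Ω fun w => agentMean fun i => f i w := by
  simp only [agentMean_apply]
  simpa using hf.smul (inv_nonneg.2 (Nat.cast_nonneg (Fintype.card ι)))

theorem inner_agentMean_sub_le [Nonempty ι] {z v : ι → E} {w : E} {D : ℝ}
    (hv : ∀ i, ⟪z i, v i⟫ ≤ ⟪z i, w⟫) (hD : ∀ i, ‖v i - w‖ ≤ D) (d : E) :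
    ⟪d, agentMean v - w⟫ ≤ ‖z - Function.const ι d‖ * D := by
  suffices hmem : agentMean v ∈ {q | ⟪d, q⟫ ≤ ‖z - Function.const ι d‖ * D + ⟪d, w⟫} by
    rw [inner_sub_right]
    exact sub_le_iff_le_add.2 hmem
  refine agentMean_mem_of_convex (convex_halfSpace_le (innerₗ E d).isLinear _) fun i => ?_
  have herr : -⟪z i - d, v i - w⟫ ≤ ‖z - Function.const ι d‖ * D := by
    calc -⟪z i - d, v i - w⟫ ≤ ‖z i - d‖ * ‖v i - w‖ :=
          neg_le.1 (neg_le_of_abs_le (abs_real_inner_le_norm _ _))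
      _ ≤ ‖z - Function.const ι d‖ * D := by
          gcongr
          · exact norm_le_pi_norm (z - Function.const ι d) i
          · exact hD i
  simp only [inner_sub_left, inner_sub_right] at herr
  simp only [mem_ofPred_eq, innerₗ_apply_apply]
  linarith [hv i]

end AgentMeanBounds

section ConvexGradient

variable {E : Type*} [NormedAddCommGroup E] [InnerProductSpace ℝ E] [CompleteSpace E]
  {Ω : Set E} {F : E → ℝ} {g p : E}

theorem inner_gradient_le_sub_of_convexOn (hF : ConvexOn ℝ Ω F) (hg : HasGradientAt F g p)
    (hp : p ∈ Ω) {q : E} (hq : q ∈ Ω) : ⟪g, q - p⟫ ≤ F q - F p := by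
  have hline : HasDerivAt (fun s : ℝ => F (AffineMap.lineMap p q s)) ⟪g, q - p⟫ 0 := by
    have hF' : HasFDerivAt F (InnerProductSpace.toDual ℝ E g) (AffineMap.lineMap p q (0 : ℝ)) := by
      simpa using hg.hasFDerivAt
    exact hF'.comp_hasDerivAt (0 : ℝ) AffineMap.hasDerivAt_lineMap
  have hslope := (hF.comp_affineMap (AffineMap.lineMap p q)).le_slope_of_hasDerivAt
    (x := (0 : ℝ)) (y := 1) (by simpa using hp) (by simpa using hq) one_pos hline
  simpa [slope_def_field] using hslope

theorem bddBelow_image_of_convexOn_of_hasGradientAt (hF : ConvexOn ℝ Ω F) (hg : HasGradientAt F g p)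
    (hp : p ∈ Ω) (hΩ : Bornology.IsBounded Ω) : BddBelow (F '' Ω) := by
  refine ⟨F p - ‖g‖ * Metric.diam Ω, ?_⟩
  rintro _ ⟨q, hq, rfl⟩
  have hdist : ‖p - q‖ ≤ Metric.diam Ω := by
    simpa [dist_eq_norm] using Metric.dist_le_diam_of_mem hΩ hp hq
  have hinner : ⟪g, p - q⟫ ≤ ‖g‖ * Metric.diam Ω :=
    (real_inner_le_norm _ _).trans (by gcongr)
  have htangent := inner_gradient_le_sub_of_convexOn hF hg hp hq
  rw [← neg_sub p q, inner_neg_right] at htangent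
  linarith

variable {ι : Type*} [Fintype ι]

theorem hasGradientAt_agentMean {f : ι → E → ℝ} {f' : ι → E}
    (hf : ∀ i, HasGradientAt (f i) (f' i) p) :
    HasGradientAt (fun w => agentMean fun i => f i w) (agentMean f') p := by
  simp only [hasGradientAt_iff_hasFDerivAt, agentMean_apply, map_smul, map_sum] at hf ⊢
  exact (HasFDerivAt.fun_sum (u := Finset.univ) fun i _ => hf i).const_smul (Fintype.card ι : ℝ)⁻¹

theorem add_inner_agentMean_sub_le_sInf_add [Nonempty ι] (hF : ConvexOn ℝ Ω F)
    (hg : HasGradientAt F g p) (hp : p ∈ Ω) (hΩ : Bornology.IsBounded Ω) {z v : ι → E}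
    (hvΩ : ∀ i, v i ∈ Ω) (hv : ∀ i, ∀ w ∈ Ω, ⟪z i, v i⟫ ≤ ⟪z i, w⟫) :
    F p + ⟪g, agentMean v - p⟫ ≤ sInf (F '' Ω) + ‖z - Function.const ι g‖ * Metric.diam Ω := by
  rw [← sub_le_iff_le_add]
  refine le_csInf ⟨_, mem_image_of_mem F hp⟩ ?_
  rintro _ ⟨w, hw, rfl⟩
  have hdist (i : ι) : ‖v i - w‖ ≤ Metric.diam Ω := by
    simpa [dist_eq_norm] using Metric.dist_le_diam_of_mem hΩ (hvΩ i) hw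
  have hlmo := inner_agentMean_sub_le (fun i => hv i w hw) hdist g
  have htangent := inner_gradient_le_sub_of_convexOn hF hg hp hw
  rw [← sub_add_sub_cancel _ w p, inner_add_right]
  linarith

end ConvexGradient

section Flow

variable {ι E : Type*} [Fintype ι] [NormedAddCommGroup E] [InnerProductSpace ℝ E]

/-- The trajectories of Algorithm 1, with the states of all agents stacked into `ι → E`; `f' i` is
the gradient of the `i`-th objective. The trackers `y` start with mean `0` rather than at `0`. -/
structure IsProjectionFreeFlow (a : ι → ι → ℝ) (Ω : Set E) (f' : ι → E → E) (β : ℝ → ℝ)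
    (x y z v : ℝ → ι → E) : Prop where
  hasDerivAt_x : ∀ t ≥ 0, HasDerivAt x (diffusion a (x t) + β t • (v t - x t)) t
  hasDerivAt_y : ∀ t ≥ 0, HasDerivAt y (diffusion a (z t)) t
  z_eq : ∀ t ≥ 0, z t = y t + Pi.map f' (x t)
  v_mem : ∀ t ≥ 0, ∀ i, v t i ∈ Ω
  inner_v_le : ∀ t ≥ 0, ∀ i, ∀ w ∈ Ω, ⟪z t i, v t i⟫ ≤ ⟪z t i, w⟫
  x_zero_mem : ∀ i, x 0 i ∈ Ω
  agentMean_y_zero : agentMean (y 0) = 0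

namespace IsProjectionFreeFlow

variable {a : ι → ι → ℝ} {Ω : Set E} {f' : ι → E → E} {β : ℝ → ℝ} {x y z v : ℝ → ι → E}
  (h : IsProjectionFreeFlow a Ω f' β x y z v)

include h

theorem x_mem (ha : ∀ i j, 0 ≤ a i j) (hΩ : Convex ℝ Ω) (hΩc : IsClosed Ω)
    (hβ : ∀ t ≥ 0, 0 < β t) : ∀ t ≥ 0, ∀ i, x t i ∈ Ω :=
  mem_of_convex_of_hasDerivAt_diffusion hΩ hΩc ha hβ h.v_mem h.x_zero_mem h.hasDerivAt_x

theorem hasDerivAt_agentMean_x (ha : ∀ i, ∑ j, a i j = ∑ j, a j i) {t : ℝ} (ht : 0 ≤ t) :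
    HasDerivAt (fun t => agentMean (x t)) (β t • (agentMean (v t) - agentMean (x t))) t := by
  simpa [Function.comp_def, agentMean_diffusion ha] using
    agentMean.hasFDerivAt.comp_hasDerivAt t (h.hasDerivAt_x t ht)

theorem tendsto_smul_v_sub_x (hΩ : Bornology.IsBounded Ω) (hβ : Tendsto β atTop (𝓝 0))
    (hx : ∀ t ≥ 0, ∀ i, x t i ∈ Ω) :
    Tendsto (fun t => β t • (v t - x t)) atTop (𝓝 0) := by
  refine hβ.zero_smul_isBoundedUnder_le ⟨Metric.diam Ω, eventually_map.2 ?_⟩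
  filter_upwards [eventually_ge_atTop 0] with t ht
  refine (pi_norm_le_iff_of_nonneg Metric.diam_nonneg).2 fun i => ?_
  simpa [dist_eq_norm] using Metric.dist_le_diam_of_mem hΩ (h.v_mem t ht i) (hx t ht i)

theorem tendsto_deviation_x [Nonempty ι] (ha : IsBalancedNetwork a)
    (hp : Tendsto (fun t => β t • (v t - x t)) atTop (𝓝 0)) :
    Tendsto (fun t => deviation (x t)) atTop (𝓝 0) :=
  ha.tendsto_deviation ((eventually_ge_atTop 0).mono h.hasDerivAt_x) hp

theorem slowlyVarying_x [Nonempty ι] (ha : IsBalancedNetwork a)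
    (hp : Tendsto (fun t => β t • (v t - x t)) atTop (𝓝 0)) : SlowlyVarying x := by
  refine slowlyVarying_of_tendsto_deriv ((eventually_ge_atTop 0).mono h.hasDerivAt_x) ?_
  simpa [Function.comp_def, diffusion_deviation] using
    (((diffusion a).continuous.tendsto 0).comp (h.tendsto_deviation_x ha hp)).add hp

theorem agentMean_z (ha : ∀ i, ∑ j, a i j = ∑ j, a j i) {t : ℝ} (ht : 0 ≤ t) :
    agentMean (z t) = agentMean (Pi.map f' (x t)) := by
  rw [h.z_eq t ht, map_add, agentMean_eq_of_hasDerivAt_diffusion ha h.hasDerivAt_y t ht,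
    h.agentMean_y_zero, zero_add]

variable [Nonempty ι] {K : ℝ≥0}

theorem tendsto_deviation_z [CompleteSpace E] (ha : IsBalancedNetwork a)
    (hf' : ∀ i, LipschitzOnWith K (f' i) Ω) (hx : ∀ t ≥ 0, ∀ i, x t i ∈ Ω)
    (hp : Tendsto (fun t => β t • (v t - x t)) atTop (𝓝 0)) :
    Tendsto (fun t => deviation (z t)) atTop (𝓝 0) := by
  have hlip := lipschitzOnWith_piMap hf'
  have hxpi : ∀ t ≥ 0, x t ∈ univ.pi fun _ => Ω := fun t ht i _ => hx t ht i
  have hslow : SlowlyVarying (Pi.map f' ∘ x) :=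
    (h.slowlyVarying_x ha hp).comp_lipschitzOnWith ((eventually_ge_atTop 0).mono hxpi) hlip
  have hcont : ContinuousOn (Pi.map f' ∘ x) (Ici 0) :=
    hlip.continuousOn.comp
      (fun t ht => (h.hasDerivAt_x t ht).continuousAt.continuousWithinAt) hxpi
  have htrack : ∀ t ≥ 0, HasDerivAt y (diffusion a (y t + (Pi.map f' ∘ x) t)) t := fun t ht => by
    simpa only [Function.comp_apply, ← h.z_eq t ht] using h.hasDerivAt_y t ht
  refine (ha.tendsto_deviation_tracker hcont hslow
    ((eventually_ge_atTop 0).mono htrack)).congr' ?_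
  filter_upwards [eventually_ge_atTop 0] with t ht
  rw [h.z_eq t ht, Function.comp_apply]

theorem tendsto_z_sub_const [CompleteSpace E] (ha : IsBalancedNetwork a) (hΩ : Convex ℝ Ω)
    (hf' : ∀ i, LipschitzOnWith K (f' i) Ω) (hx : ∀ t ≥ 0, ∀ i, x t i ∈ Ω)
    (hp : Tendsto (fun t => β t • (v t - x t)) atTop (𝓝 0)) :
    Tendsto (fun t => z t - Function.const ι (agentMean fun i => f' i (agentMean (x t))))
      atTop (𝓝 0) := by
  set m : ℝ → ι → E := fun t => Function.const ι (agentMean (x t))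
  have hgrad : Tendsto (fun t => Pi.map f' (x t) - Pi.map f' (m t)) atTop (𝓝 0) := by
    refine squeeze_zero_norm' ?_
      (by simpa using (h.tendsto_deviation_x ha hp).norm.const_mul (K : ℝ))
    filter_upwards [eventually_ge_atTop 0] with t ht
    exact (lipschitzOnWith_piMap hf').norm_sub_le (fun i _ => hx t ht i)
      fun i _ => agentMean_mem_of_convex hΩ (hx t ht)
  have hmean : Tendsto
      (fun t => Function.const ι (agentMean (Pi.map f' (x t) - Pi.map f' (m t)))) atTop (𝓝 0) :=
    tendsto_pi_nhds.2 fun _ => by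
      simpa [Function.comp_def] using (agentMean.continuous.tendsto 0).comp hgrad
  refine (((h.tendsto_deviation_z ha hf' hx hp).add hmean).congr' ?_).trans_eq (by rw [add_zero])
  filter_upwards [eventually_ge_atTop 0] with t ht
  rw [deviation_apply, h.agentMean_z ha.balanced ht, map_sub, ← Function.const_sub,
    sub_add_sub_cancel]
  rfl

end IsProjectionFreeFlow

end Flow

theorem average_objective_convergence_general {ι E : Type*} [Fintype ι] [Nonempty ι]
    [NormedAddCommGroup E] [InnerProductSpace ℝ E] [CompleteSpace E] {a : ι → ι → ℝ}
    (ha : IsBalancedNetwork a) {Ω : Set E} (hΩ : Convex ℝ Ω) (hΩc : IsClosed Ω)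
    (hΩb : Bornology.IsBounded Ω) {f : ι → E → ℝ} {f' : ι → E → E}
    (hf : ConvexOn ℝ Ω (∑ i, f i)) (hf' : ∀ i, ∀ p ∈ Ω, HasGradientAt (f i) (f' i p) p) {K : ℝ≥0}
    (hlip : ∀ i, LipschitzOnWith K (f' i) Ω) {β : ℝ → ℝ} (hβpos : ∀ t ≥ 0, 0 < β t)
    (hβ0 : Tendsto β atTop (𝓝 0)) (hβdiv : Tendsto (fun t => ∫ τ in (0 : ℝ)..t, β τ) atTop atTop)
    {x y z v : ℝ → ι → E} (h : IsProjectionFreeFlow a Ω f' β x y z v) :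
    Tendsto (fun t => agentMean fun i => f i (agentMean (x t))) atTop
      (𝓝 (sInf ((fun w => agentMean fun i => f i w) '' Ω))) := by
  set F : E → ℝ := fun w => agentMean fun i => f i w
  set m : ℝ → E := fun t => agentMean (x t)
  set d : ℝ → E := fun t => agentMean fun i => f' i (m t)
  have hF : ConvexOn ℝ Ω F := convexOn_agentMean hf
  have hxΩ : ∀ t ≥ 0, ∀ i, x t i ∈ Ω := h.x_mem ha.nonneg hΩ hΩc hβpos
  have hmΩ : ∀ t ≥ 0, m t ∈ Ω := fun t ht => agentMean_mem_of_convex hΩ (hxΩ t ht)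
  have hd : ∀ t ≥ 0, HasGradientAt F (d t) (m t) := fun t ht =>
    hasGradientAt_agentMean fun i => hf' i _ (hmΩ t ht)
  have hbdd : BddBelow (F '' Ω) :=
    bddBelow_image_of_convexOn_of_hasGradientAt hF (hd 0 le_rfl) (hmΩ 0 le_rfl) hΩb
  have hpert := h.tendsto_smul_v_sub_x hΩb hβ0 hxΩ
  have herr : Tendsto (fun t => ‖z t - Function.const ι (d t)‖ * Metric.diam Ω) atTop (𝓝 0) := by
    simpa using (h.tendsto_z_sub_const ha hΩ hlip hxΩ hpert).norm.mul_const (Metric.diam Ω)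
  have hderiv : ∀ t ≥ 0, HasDerivAt (fun t => F (m t) - sInf (F '' Ω))
      ⟪d t, β t • (agentMean (v t) - m t)⟫ t := fun t ht =>
    ((hd t ht).hasFDerivAt.comp_hasDerivAt t
      (h.hasDerivAt_agentMean_x ha.balanced ht)).sub_const _
  have hdescent : ∀ t ≥ 0, ⟪d t, β t • (agentMean (v t) - m t)⟫ ≤
      -β t * (F (m t) - sInf (F '' Ω) - ‖z t - Function.const ι (d t)‖ * Metric.diam Ω) := by
    intro t ht
    have hgap := add_inner_agentMean_sub_le_sInf_add hF (hd t ht) (hmΩ t ht) hΩb (h.v_mem t ht)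
      (h.inner_v_le t ht)
    rw [real_inner_smul_right]
    nlinarith [hβpos t ht]
  have hzero := tendsto_zero_of_deriv_le_neg_mul_sub hβdiv
    ((eventually_ge_atTop 0).mono hβpos) ((eventually_ge_atTop 0).mono hderiv)
    ((eventually_ge_atTop 0).mono fun t ht =>
      sub_nonneg.2 (csInf_le hbdd (mem_image_of_mem F (hmΩ t ht)))) herr
    ((eventually_ge_atTop 0).mono hdescent)
  simpa using hzero.add_const (sInf (F '' Ω))

end ProjectionFree

/-- Objective value convergence of the average: along the distributed
projection-free dynamics (Algorithm 1) with initial conditions `x i 0 ∈ Ω`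
and `y i 0 = 0`, the averaged objective value `F (x̄ t)` converges to the
optimal value `min_{x ∈ Ω} F x`, where `x̄ t = (1/N) ∑ i, x i t` and
`F x = (1/N) ∑ i, f i x`. -/
theorem average_objective_convergence
    (n N : ℕ) (hN : 0 < N)
    (a : Fin N → Fin N → ℝ)
    (ha_nonneg : ∀ i j, 0 ≤ a i j)
    (ha_conn : ∀ i j : Fin N, Relation.ReflTransGen (fun p q => 0 < a q p) i j)
    (ha_bal : ∀ i, ∑ j, a i j = ∑ j, a j i)
    (Ω : Set (EuclideanSpace ℝ (Fin n)))
    (hΩconv : Convex ℝ Ω) (hΩcpt : IsCompact Ω) (hΩne : Ω.Nonempty)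
    (f : Fin N → EuclideanSpace ℝ (Fin n) → ℝ) (κ : ℝ) (hκ : 0 < κ)
    (hfconv : ∀ i, ConvexOn ℝ Set.univ (f i))
    (hfdiff : ∀ i, Differentiable ℝ (f i))
    (hflip : ∀ i, ∀ p ∈ Ω, ∀ q ∈ Ω,
      ‖gradient (f i) p - gradient (f i) q‖ ≤ κ * ‖p - q‖)
    (β : ℝ → ℝ)
    (hβpos : ∀ t ≥ (0:ℝ), 0 < β t)
    (hβ0 : Tendsto β atTop (nhds 0))
    (hβdiv : Tendsto (fun t => ∫ τ in (0:ℝ)..t, β τ) atTop atTop)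
    (x y z v : Fin N → ℝ → EuclideanSpace ℝ (Fin n))
    (hx : ∀ i, ∀ t ≥ (0:ℝ), HasDerivAt (x i)
      (∑ j, a i j • (x j t - x i t) + β t • (v i t - x i t)) t)
    (hy : ∀ i, ∀ t ≥ (0:ℝ), HasDerivAt (y i) (∑ j, a i j • (z j t - z i t)) t)
    (hz : ∀ i, ∀ t ≥ (0:ℝ), z i t = y i t + gradient (f i) (x i t))
    (hv : ∀ i, ∀ t ≥ (0:ℝ), v i t ∈ Ω ∧ ∀ w ∈ Ω, ⟪z i t, v i t⟫ ≤ ⟪z i t, w⟫)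
    (hx0 : ∀ i, x i 0 ∈ Ω) (hy0 : ∀ i, y i 0 = 0) :
    Tendsto (fun t => (N:ℝ)⁻¹ * ∑ i, f i ((N:ℝ)⁻¹ • ∑ k, x k t)) atTop
      (nhds (sInf ((fun w => (N:ℝ)⁻¹ * ∑ i, f i w) '' Ω))) := by
  have : Nonempty (Fin N) := ⟨⟨0, hN⟩⟩
  have hflow : IsProjectionFreeFlow a Ω (fun i => gradient (f i)) β
      (fun t i => x i t) (fun t i => y i t) (fun t i => z i t) (fun t i => v i t) :=
    { hasDerivAt_x := fun t ht => hasDerivAt_pi.2 fun i => by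
        simpa [diffusion_apply] using hx i t ht
      hasDerivAt_y := fun t ht => hasDerivAt_pi.2 fun i => by
        simpa [diffusion_apply] using hy i t ht
      z_eq := fun t ht => funext fun i => hz i t ht
      v_mem := fun t ht i => (hv i t ht).1
      inner_v_le := fun t ht i => (hv i t ht).2
      x_zero_mem := hx0
      agentMean_y_zero := by simp [agentMean_apply, hy0] }
  have hFconv : ConvexOn ℝ Set.univ (∑ i, f i) :=
    Finset.sum_induction f _ (fun _ _ => .add) (convexOn_const 0 convex_univ) fun i _ => hfconv i
  have hlip (i : Fin N) : LipschitzOnWith ⟨κ, hκ.le⟩ (gradient (f i)) Ω :=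
    .of_dist_le_mul fun p hp q hq => by
      rw [dist_eq_norm, dist_eq_norm]
      exact hflip i p hp q hq
  simpa only [agentMean_apply, Fintype.card_fin, smul_eq_mul] using
    average_objective_convergence_general ⟨ha_nonneg, ha_conn, ha_bal⟩ hΩconv hΩcpt.isClosed
      hΩcpt.isBounded (hFconv.subset (Set.subset_univ Ω) hΩconv)
      (fun i p _ => (hfdiff i p).hasGradientAt) hlip hβpos hβ0 hβdiv hflow
end
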